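/- arXiv:2306.07852 — 4 statements merged into one kernel-verified Lean document; each statement's English description precedes it below -/
import Mathlib

section
/- Let θ: ℝ → ℝ be a strictly increasing function with θ(0) = 0. Then for all real numbers a and b, the equation θ(|a − b|) = θ(a) + θ(b) holds if and only if a ≥ 0, b ≥ 0 and a·b = 0. (This is the equivalence, used in the paper to rewrite the complementarity conditions of the KKT system as a single smooth equation.) -/
/-!
Complementarity of `a` and `b` says that `min a b = 0`. By symmetry let `b ≤ a`, so that
`|a - b| = a - b` and `min a b = b`. If `b ≠ 0`, then subtracting `b` from `a` and adding `θ b` to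
`θ a` move in opposite directions, so `θ (a - b)` and `θ a + θ b` lie on different sides of `θ a`.
-/

section OrderedGroup

variable {G M : Type*} [AddCommGroup G] [LinearOrder G] [IsOrderedAddMonoid G]
  [AddCommMonoid M] [Preorder M] [AddLeftStrictMono M] {θ : G → M}

theorem map_sub_eq_add_iff_eq_zero_of_strictMono (hθ : StrictMono θ) (hθ0 : θ 0 = 0) (a b : G) :
    θ (a - b) = θ a + θ b ↔ b = 0 := by
  refine ⟨fun h => ?_, fun hb => by simp [hb, hθ0]⟩
  rcases lt_trichotomy b 0 with hb | hb | hb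
  · have hθb : θ b < 0 := hθ0 ▸ hθ hb
    have : θ a + θ b < θ (a - b) :=
      calc θ a + θ b < θ a := add_lt_of_neg_right _ hθb
        _ < θ (a - b) := hθ (lt_sub_iff_add_lt.mpr (add_lt_of_neg_right a hb))
    exact absurd h this.ne'
  · exact hb
  · have hθb : 0 < θ b := hθ0 ▸ hθ hb
    have : θ (a - b) < θ a + θ b :=
      calc θ (a - b) < θ a := hθ (sub_lt_self a hb)
        _ < θ a + θ b := lt_add_of_pos_right _ hθb
    exact absurd h this.ne

theorem map_abs_sub_eq_add_iff_min_eq_zero_of_strictMono (hθ : StrictMono θ) (hθ0 : θ 0 = 0)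
    (a b : G) : θ |a - b| = θ a + θ b ↔ min a b = 0 := by
  wlog hba : b ≤ a generalizing a b
  · rw [abs_sub_comm, add_comm, min_comm]
    exact this b a (le_of_not_ge hba)
  · rw [abs_of_nonneg (sub_nonneg.mpr hba), min_eq_right hba]
    exact map_sub_eq_add_iff_eq_zero_of_strictMono hθ hθ0 a b

end OrderedGroup

theorem min_eq_zero_iff_nonneg_and_mul_eq_zero {R : Type*} [MulZeroClass R] [NoZeroDivisors R]
    [LinearOrder R] (a b : R) : min a b = 0 ↔ 0 ≤ a ∧ 0 ≤ b ∧ a * b = 0 := by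
  rw [mul_eq_zero]
  constructor
  · intro h
    exact ⟨h ▸ min_le_left a b, h ▸ min_le_right a b,
      (min_choice a b).imp (·.symm.trans h) (·.symm.trans h)⟩
  · rintro ⟨ha, hb, rfl | rfl⟩
    · exact min_eq_left hb
    · exact min_eq_right ha

theorem theta_abs_sub_eq_add_iff_complementarity_general {R M : Type*}
    [NonUnitalNonAssocRing R] [NoZeroDivisors R] [LinearOrder R] [IsOrderedAddMonoid R]
    [AddCommMonoid M] [Preorder M] [AddLeftStrictMono M]
    {θ : R → M} (hθ : StrictMono θ) (hθ0 : θ 0 = 0) (a b : R) :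
    θ |a - b| = θ a + θ b ↔ (0 ≤ a ∧ 0 ≤ b ∧ a * b = 0) :=
  (map_abs_sub_eq_add_iff_min_eq_zero_of_strictMono hθ hθ0 a b).trans
    (min_eq_zero_iff_nonneg_and_mul_eq_zero a b)

/-- For a strictly increasing `θ : ℝ → ℝ` with `θ 0 = 0`, the equation
`θ |a - b| = θ a + θ b` holds iff `a ≥ 0`, `b ≥ 0` and `a * b = 0`. -/
theorem theta_abs_sub_eq_add_iff_complementarity
    (θ : ℝ → ℝ) (hθ : StrictMono θ) (hθ0 : θ 0 = 0) (a b : ℝ) :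
    θ |a - b| = θ a + θ b ↔ (0 ≤ a ∧ 0 ≤ b ∧ a * b = 0) :=
  theta_abs_sub_eq_add_iff_complementarity_general hθ hθ0 a b
end

section
/- Let f: ℝⁿ → ℝ and g: ℝⁿ → ℝᵐ be continuously differentiable, and define F: ℝⁿ × ℝᵐ → ℝⁿ × ℝᵐ by F(x,μ) = ( ∇f(x) + Σᵢ μᵢ ∇gᵢ(x) , (φ(μᵢ, −gᵢ(x)))ᵢ₌₁,…,ₘ ), where φ(a,b) = |a−b|³ − a³ − b³. Then F(x,μ) = 0 if and only if (x,μ) is a KKT pair for the problem of minimizing f subject to g(x) ≤ 0. -/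
/-- The cubic complementarity function `φ(a,b) = |a - b|³ - a³ - b³`. -/
noncomputable def cubicPhi (a b : ℝ) : ℝ := |a - b| ^ 3 - a ^ 3 - b ^ 3

/-- Functions for nonlinear complementarity problems (NCP-functions): those whose zero set is the
complementarity set, so that a complementarity condition can be written as an equation `φ a b = 0`.
-/
def IsNCPFunction (φ : ℝ → ℝ → ℝ) : Prop :=
  ∀ a b, φ a b = 0 ↔ 0 ≤ a ∧ 0 ≤ b ∧ a * b = 0

theorem IsNCPFunction.forall_neg_eq_zero_iff {φ : ℝ → ℝ → ℝ} (hφ : IsNCPFunction φ)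
    {ι : Sort*} (μ c : ι → ℝ) :
    (∀ i, φ (μ i) (-c i) = 0) ↔
      (∀ i, c i ≤ 0) ∧ (∀ i, 0 ≤ μ i) ∧ (∀ i, μ i * c i = 0) := by
  simp only [hφ _ _, neg_nonneg, mul_neg, neg_eq_zero, forall_and]
  exact and_left_comm

theorem cubicPhi_comm (a b : ℝ) : cubicPhi a b = cubicPhi b a := by
  rw [cubicPhi, cubicPhi, abs_sub_comm, sub_right_comm]

theorem cubicPhi_of_le {a b : ℝ} (hba : b ≤ a) :
    cubicPhi a b = -b * (3 * (a - b / 2) ^ 2 + 5 / 4 * b ^ 2) := by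
  rw [cubicPhi, abs_of_nonneg (sub_nonneg.mpr hba)]
  ring

theorem cubicPhi_eq_zero_iff_of_le {a b : ℝ} (hba : b ≤ a) : cubicPhi a b = 0 ↔ b = 0 := by
  rw [cubicPhi_of_le hba]
  refine ⟨fun h ↦ ?_, fun hb ↦ by simp [hb]⟩
  by_contra hb
  have hpos : 0 < 3 * (a - b / 2) ^ 2 + 5 / 4 * b ^ 2 := by positivity
  exact mul_ne_zero (neg_ne_zero.mpr hb) hpos.ne' h

theorem isNCPFunction_cubicPhi : IsNCPFunction cubicPhi := by
  intro a b
  wlog hba : b ≤ a generalizing a b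
  · rw [cubicPhi_comm, this b a (le_of_not_ge hba), and_left_comm, mul_comm]
  rw [cubicPhi_eq_zero_iff_of_le hba]
  constructor
  · rintro rfl
    exact ⟨hba, le_rfl, mul_zero a⟩
  · rintro ⟨-, hb, hab⟩
    rcases mul_eq_zero.mp hab with rfl | hb_zero
    · exact le_antisymm hba hb
    · exact hb_zero

theorem cubicPhi_KKT_system_iff_KKT_pair_general
    {E ι : Type*} [NormedAddCommGroup E] [InnerProductSpace ℝ E] [CompleteSpace E] [Fintype ι]
    {f : E → ℝ} {g : ι → E → ℝ} {x f' : E} {g' : ι → E}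
    (_hf : HasGradientAt f f' x) (_hg : ∀ i, HasGradientAt (g i) (g' i) x) (μ : ι → ℝ) :
    (f' + ∑ i, μ i • g' i = 0 ∧ ∀ i, cubicPhi (μ i) (-(g i x)) = 0) ↔
      f' + ∑ i, μ i • g' i = 0 ∧
        (∀ i, g i x ≤ 0) ∧ (∀ i, 0 ≤ μ i) ∧ (∀ i, μ i * g i x = 0) :=
  and_congr_right' (isNCPFunction_cubicPhi.forall_neg_eq_zero_iff μ fun i ↦ g i x)

/-- For C¹ functions `f : ℝⁿ → ℝ` and `g : ℝⁿ → ℝᵐ`, the map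
`F(x,μ) = (∇f(x) + Σᵢ μᵢ ∇gᵢ(x), (φ(μᵢ, -gᵢ(x)))ᵢ)` vanishes at `(x,μ)` iff
`(x,μ)` is a KKT pair for `min f(x)` subject to `g(x) ≤ 0`. -/
theorem cubicPhi_KKT_system_iff_KKT_pair
    {n m : ℕ} (f : EuclideanSpace ℝ (Fin n) → ℝ)
    (g : Fin m → EuclideanSpace ℝ (Fin n) → ℝ)
    (hf : ContDiff ℝ 1 f) (hg : ∀ i, ContDiff ℝ 1 (g i))
    (x : EuclideanSpace ℝ (Fin n)) (μ : Fin m → ℝ) :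
    ((gradient f x + ∑ i, μ i • gradient (g i) x = 0) ∧
      (∀ i, cubicPhi (μ i) (-(g i x)) = 0)) ↔
    ((gradient f x + ∑ i, μ i • gradient (g i) x = 0) ∧
      (∀ i, g i x ≤ 0) ∧ (∀ i, 0 ≤ μ i) ∧ (∀ i, μ i * g i x = 0)) :=
  cubicPhi_KKT_system_iff_KKT_pair_general
    (hf.differentiable one_ne_zero x).hasGradientAt
    (fun i ↦ ((hg i).differentiable one_ne_zero x).hasGradientAt) μ
end

section
/- Let q, p ∈ ℕ and let ρ: ℝ^q × ((0,1) × ℝ^p) → ℝ^p be twice continuously differentiable. Suppose 0 is a regular value of ρ, i.e., at every point (a, λ, y) with ρ(a, λ, y) = 0 the total derivative Dρ(a, λ, y): ℝ^{q+1+p} → ℝ^p is surjective. Then for Lebesgue-almost every a ∈ ℝ^q, 0 is a regular value of the section ρ_a := ρ(a, ·, ·): (0,1) × ℝ^p → ℝ^p, i.e., at every (λ, y) with ρ_a(λ, y) = 0 the derivative Dρ_a(λ, y): ℝ^{1+p} → ℝ^p is surjective. -/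
open MeasureTheory

/-!
The exceptional parameters `a` are the critical values of the projection `(a, w) ↦ a` restricted to
the manifold `ρ⁻¹(0)`, whose dimension exceeds that of the parameter space by at most one. Hence
only Sard's theorem for `C²` maps `f : E → F` with `dim E ≤ dim F + 1` is needed.

Stratify the critical points by the rank `k < dim F` of `Df`. Near a point of rank `k` the map takes
the form `f(t, s) = (t, g(t, s))` with `t ∈ ℝᵏ` in suitable coordinates, and its points of rank at
most `k` are those where `∂g/∂s = 0`. By Fubini it suffices to treat the maps `g(t, ·) : K → Q` on
the set where their derivative vanishes, and there `dim K ≤ 2 dim Q`. At almost every point of this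
set, namely at its density points, the second derivative vanishes as well, so small `ε`-balls are
mapped into balls of radius `o(ε²)`; the remaining null set is covered using radius `O(ε²)`.
-/

open Metric Set Filter Module
open scoped ContDiff ENNReal NNReal Topology

section Covering

lemma measure_image_eq_zero_of_locally_null {X Y : Type*} [TopologicalSpace X]
    [SecondCountableTopology X] [MeasurableSpace Y] (ν : Measure Y) {f : X → Y} {s : Set X}
    (h : ∀ x ∈ s, ∃ u ∈ 𝓝[s] x, ν (f '' u) = 0) : ν (f '' s) = 0 := by
  have hcomap : ∀ u, OuterMeasure.comap f ν.toOuterMeasure u = ν (f '' u) := fun u =>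
    OuterMeasure.comap_apply f ν.toOuterMeasure u
  simp only [← hcomap] at h ⊢
  exact measure_null_of_locally_null s h

variable {E : Type*} [NormedAddCommGroup E] [NormedSpace ℝ E] [FiniteDimensional ℝ E]
  [MeasurableSpace E] [BorelSpace E] (μ : Measure E) [μ.IsAddHaarMeasure]

lemma measure_image_le_mul_of_closedBall {Y : Type*} [MeasurableSpace Y] (ν : Measure Y)
    {f : E → Y} {s : Set E} {c : ℝ≥0∞} (hc : c ≠ ⊤)
    (h : ∀ x ∈ s, ∀ᶠ r in 𝓝[>] (0 : ℝ), ν (f '' (s ∩ closedBall x r)) ≤ c * μ (closedBall x r)) :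
    ν (f '' s) ≤ c * μ s := by
  have hle : ∀ η : ℝ≥0∞, η ≠ 0 → ν (f '' s) ≤ c * (μ s + η) := by
    intro η hη
    obtain ⟨t, r, tc, -, hr, hcov, hsum⟩ :=
      Besicovitch.exists_closedBall_covering_tsum_measure_le μ hη
        (fun x => {r | ν (f '' (s ∩ closedBall x r)) ≤ c * μ (closedBall x r)}) s
        fun x hx δ hδ => ((h x hx).and (Ioo_mem_nhdsGT hδ)).exists
    have := tc.to_subtype
    calc ν (f '' s) ≤ ν (⋃ x : t, f '' (s ∩ closedBall (x : E) (r x))) := by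
          rw [← image_iUnion, ← inter_iUnion, iUnion_coe_set, inter_eq_left.2 hcov]
      _ ≤ ∑' x : t, ν (f '' (s ∩ closedBall (x : E) (r x))) := measure_iUnion_le _
      _ ≤ ∑' x : t, c * μ (closedBall (x : E) (r x)) := ENNReal.tsum_le_tsum fun x => hr x x.2
      _ = c * ∑' x : t, μ (closedBall (x : E) (r x)) := ENNReal.tsum_mul_left
      _ ≤ c * (μ s + η) := by gcongr
  have hlim : Tendsto (fun η : ℝ≥0∞ => c * (μ s + η)) (𝓝[>] 0) (𝓝 (c * (μ s + 0))) :=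
    (ENNReal.Tendsto.const_mul (tendsto_const_nhds.add tendsto_id) (Or.inr hc)).mono_left
      nhdsWithin_le_nhds
  rw [add_zero] at hlim
  exact ge_of_tendsto hlim (eventually_nhdsWithin_of_forall fun η hη => hle η hη.ne')

variable {F : Type*} [NormedAddCommGroup F] [NormedSpace ℝ F] [FiniteDimensional ℝ F]
  [MeasurableSpace F] [BorelSpace F] (ν : Measure F) [ν.IsAddHaarMeasure]

lemma measure_image_le_of_norm_sub_le_pow {f : E → F} {s : Set E} {c : ℝ≥0} {d : ℕ}
    (hd : finrank ℝ E ≤ d * finrank ℝ F)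
    (h : ∀ x ∈ s, ∀ᶠ y in 𝓝[s] x, ‖f y - f x‖ ≤ c * ‖y - x‖ ^ d) :
    ν (f '' s) ≤ (c : ℝ≥0∞) ^ finrank ℝ F * (ν (ball 0 1) / μ (ball 0 1)) * μ s := by
  have hμ : μ (ball 0 1) ≠ 0 := (measure_ball_pos μ 0 one_pos).ne'
  have hν : ν (ball 0 1) / μ (ball 0 1) ≠ ⊤ :=
    ENNReal.div_ne_top measure_ball_lt_top.ne hμ
  refine measure_image_le_mul_of_closedBall μ ν (ENNReal.mul_ne_top (by finiteness) hν)
    fun x hx => ?_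
  obtain ⟨ε, hε, hball⟩ := mem_nhdsWithin_iff.1 (h x hx)
  filter_upwards [Ioo_mem_nhdsGT (lt_min hε one_pos)] with r ⟨hr₀, hr⟩
  have hrε : r < ε := hr.trans_le (min_le_left _ _)
  have hr₁ : r ≤ 1 := hr.le.trans (min_le_right _ _)
  have himage : f '' (s ∩ closedBall x r) ⊆ closedBall (f x) (c * r ^ d) := by
    rintro _ ⟨y, ⟨hys, hyr⟩, rfl⟩
    rw [mem_closedBall, dist_eq_norm] at hyr ⊢
    calc ‖f y - f x‖ ≤ c * ‖y - x‖ ^ d :=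
          hball ⟨by rw [mem_ball, dist_eq_norm]; exact hyr.trans_lt hrε, hys⟩
      _ ≤ c * r ^ d := by gcongr
  calc ν (f '' (s ∩ closedBall x r)) ≤ ν (closedBall (f x) (c * r ^ d)) := measure_mono himage
    _ = (c : ℝ≥0∞) ^ finrank ℝ F * ENNReal.ofReal (r ^ (d * finrank ℝ F)) *
          ν (ball 0 1) := by
        rw [Measure.addHaar_closedBall ν _ (by positivity), mul_pow, ← pow_mul,
          ENNReal.ofReal_mul (by positivity), ENNReal.ofReal_pow c.coe_nonneg,
          ENNReal.ofReal_coe_nnreal]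
    _ ≤ (c : ℝ≥0∞) ^ finrank ℝ F * ENNReal.ofReal (r ^ finrank ℝ E) * ν (ball 0 1) := by
        gcongr _ * ENNReal.ofReal ?_ * _
        exact pow_le_pow_of_le_one hr₀.le hr₁ hd
    _ = (c : ℝ≥0∞) ^ finrank ℝ F * (ν (ball 0 1) / μ (ball 0 1)) *
          μ (closedBall x r) := by
        rw [Measure.addHaar_closedBall μ _ hr₀.le, mul_assoc, mul_assoc, mul_left_comm (_ / _),
          ENNReal.div_mul_cancel hμ measure_ball_lt_top.ne]

end Covering

section Density

variable {E : Type*} [NormedAddCommGroup E] [NormedSpace ℝ E] [FiniteDimensional ℝ E]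
  [MeasurableSpace E] [BorelSpace E] (μ : Measure E) [μ.IsAddHaarMeasure]

lemma tangentConeAt_eq_univ_of_density_one {s : Set E} {x : E}
    (h : Tendsto (fun r => μ (s ∩ closedBall x r) / μ (closedBall x r)) (𝓝[>] 0) (𝓝 1)) :
    tangentConeAt ℝ s x = univ := by
  refine eq_univ_of_forall fun v => ?_
  have hnear : ∀ n : ℕ, ∃ r ∈ Ioo (0 : ℝ) (1 / (n + 1)), ∃ w ∈ closedBall v (1 / (n + 1)),
      x + r • w ∈ s := by
    intro n
    have hn : (0 : ℝ) < 1 / (n + 1) := Nat.one_div_pos_of_nat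
    obtain ⟨r, ⟨y, hys, hy⟩, hr⟩ :=
      ((Measure.eventually_nonempty_inter_smul_of_density_one μ s x h (closedBall v (1 / (n + 1)))
        measurableSet_closedBall (measure_closedBall_pos μ v hn).ne').and
          (Ioo_mem_nhdsGT hn)).exists
    obtain ⟨_, rfl, _, ⟨w, hw, rfl⟩, rfl⟩ := hy
    exact ⟨r, hr, w, hw, hys⟩
  choose r hr w hw hmem using hnear
  have hr₀ : Tendsto r atTop (𝓝 0) :=
    squeeze_zero (fun n => (hr n).1.le) (fun n => (hr n).2.le)
      tendsto_one_div_add_atTop_nhds_zero_nat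
  have hwv : Tendsto w atTop (𝓝 v) :=
    tendsto_iff_dist_tendsto_zero.2 <| squeeze_zero (fun n => dist_nonneg) (fun n => hw n)
      tendsto_one_div_add_atTop_nhds_zero_nat
  refine mem_tangentConeAt_of_seq atTop (fun n => (r n)⁻¹) (fun n => r n • w n) ?_
    (Eventually.of_forall hmem) (hwv.congr fun n => ?_)
  · simpa only [zero_smul ℝ] using hr₀.smul hwv
  · rw [inv_smul_smul₀ (hr n).1.ne']

lemma ae_restrict_uniqueDiffWithinAt (s : Set E) :
    ∀ᵐ x ∂μ.restrict s, UniqueDiffWithinAt ℝ s x := by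
  filter_upwards [Besicovitch.ae_tendsto_measure_inter_div μ s] with x hx
  have hcone := tangentConeAt_eq_univ_of_density_one μ hx
  refine ⟨?_, mem_closure_of_nonempty_tangentConeAt (𝕜 := ℝ) ?_⟩
  · rw [hcone, Submodule.span_univ]
    exact dense_univ
  · rw [hcone]
    exact univ_nonempty

lemma measure_setOf_fderiv_ne_zero {G : Type*} [NormedAddCommGroup G] [NormedSpace ℝ G]
    {g : E → G} {s : Set E} (hg : ∀ x ∈ s, g x = 0) :
    μ {x ∈ s | fderiv ℝ g x ≠ 0} = 0 := by
  have hsub : {x ∈ s | fderiv ℝ g x ≠ 0} ⊆ {x ∈ s | ¬UniqueDiffWithinAt ℝ s x} := by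
    rintro x ⟨hxs, hx⟩
    refine ⟨hxs, fun hunique => hx ?_⟩
    have hdiff : DifferentiableAt ℝ g x := by
      by_contra hnot
      exact hx (fderiv_zero_of_not_differentiableAt hnot)
    exact hunique.eq hdiff.hasFDerivAt.hasFDerivWithinAt
      ((hasFDerivWithinAt_const 0 x s).congr hg (hg x hxs))
  refine measure_mono_null hsub ?_
  rw [← Measure.restrict_eq_self μ (sep_subset s _)]
  exact measure_mono_null (fun x hx => hx.2) (ae_restrict_uniqueDiffWithinAt μ s)

end Density

section ZeroDerivative

variable {E F : Type*} [NormedAddCommGroup E] [NormedSpace ℝ E] [NormedAddCommGroup F]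
  [NormedSpace ℝ F] {f : E → F}

lemma eventually_norm_sub_le_pow_succ {x : E} {c : ℝ≥0} {n : ℕ}
    (hf : ∀ᶠ z in 𝓝 x, DifferentiableAt ℝ f z)
    (hf' : ∀ᶠ z in 𝓝 x, ‖fderiv ℝ f z‖ ≤ c * ‖z - x‖ ^ n) :
    ∀ᶠ y in 𝓝 x, ‖f y - f x‖ ≤ c * ‖y - x‖ ^ (n + 1) := by
  have hsegment := (convex_univ (𝕜 := ℝ)).eventually_nhdsWithin_segment (mem_univ x)
    ((hf.and hf').filter_mono nhdsWithin_le_nhds)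
  rw [nhdsWithin_univ] at hsegment
  filter_upwards [hsegment] with y hy
  rw [pow_succ, ← mul_assoc]
  refine (convex_segment x y).norm_image_sub_le_of_norm_fderiv_le (fun z hz => (hy z hz).1)
    (fun z hz => (hy z hz).2.trans ?_) (left_mem_segment ℝ x y) (right_mem_segment ℝ x y)
  gcongr
  exact norm_sub_le_of_mem_segment hz

lemma eventually_norm_sub_le_sq_of_fderiv_eq_zero {x : E} {c : ℝ≥0} (hf : ContDiffAt ℝ 2 f x)
    (hf' : fderiv ℝ f x = 0) (hc : ‖fderiv ℝ (fderiv ℝ f) x‖₊ < c) :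
    ∀ᶠ y in 𝓝 x, ‖f y - f x‖ ≤ c * ‖y - x‖ ^ 2 := by
  obtain ⟨t, ht, hlip⟩ :=
    (hf.fderiv_right (m := 1) (by norm_num)).exists_lipschitzOnWith_of_nnnorm_lt c hc
  refine eventually_norm_sub_le_pow_succ
    ((hf.eventually (by simp)).mono fun z hz => hz.differentiableAt (by simp)) ?_
  filter_upwards [ht] with z hz
  simpa only [hf', sub_zero, pow_one] using hlip.norm_sub_le hz (mem_of_mem_nhds ht)

variable [FiniteDimensional ℝ E] [FiniteDimensional ℝ F] [MeasurableSpace F] [BorelSpace F]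
  (ν : Measure F) [ν.IsAddHaarMeasure] {s : Set E}

lemma measure_image_le_of_nnnorm_fderiv_fderiv_lt [MeasurableSpace E] [BorelSpace E]
    (μ : Measure E) [μ.IsAddHaarMeasure] {c : ℝ≥0} (hEF : finrank ℝ E ≤ 2 * finrank ℝ F)
    (hf : ∀ x ∈ s, ContDiffAt ℝ 2 f x) (hf' : ∀ x ∈ s, fderiv ℝ f x = 0)
    (hc : ∀ x ∈ s, ‖fderiv ℝ (fderiv ℝ f) x‖₊ < c) :
    ν (f '' s) ≤ (c : ℝ≥0∞) ^ finrank ℝ F * (ν (ball 0 1) / μ (ball 0 1)) * μ s :=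
  measure_image_le_of_norm_sub_le_pow μ ν hEF fun x hx =>
    (eventually_norm_sub_le_sq_of_fderiv_eq_zero (hf x hx) (hf' x hx) (hc x hx)).filter_mono
      nhdsWithin_le_nhds

lemma measure_image_eq_zero_of_fderiv_eq_zero_of_null [MeasurableSpace E] [BorelSpace E]
    (μ : Measure E) [μ.IsAddHaarMeasure] (hEF : finrank ℝ E ≤ 2 * finrank ℝ F)
    (hf : ∀ x ∈ s, ContDiffAt ℝ 2 f x) (hf' : ∀ x ∈ s, fderiv ℝ f x = 0) (hs : μ s = 0) :
    ν (f '' s) = 0 := by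
  have hcover : s ⊆ ⋃ n : ℕ, {x ∈ s | ‖fderiv ℝ (fderiv ℝ f) x‖₊ < n} := fun x hx =>
    mem_iUnion.2 <| (exists_nat_gt ‖fderiv ℝ (fderiv ℝ f) x‖₊).imp fun n hn => ⟨hx, hn⟩
  refine measure_mono_null (image_mono hcover) ?_
  rw [image_iUnion, measure_iUnion_null_iff]
  intro n
  have hle := measure_image_le_of_nnnorm_fderiv_fderiv_lt ν μ hEF (fun x hx => hf x hx.1)
    (fun x hx => hf' x hx.1) (s := {x ∈ s | ‖fderiv ℝ (fderiv ℝ f) x‖₊ < n}) (fun x hx => hx.2)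
  rwa [measure_mono_null (sep_subset s _) hs, mul_zero, nonpos_iff_eq_zero] at hle

lemma measure_image_eq_zero_of_fderiv_fderiv_eq_zero [Nontrivial F]
    (hEF : finrank ℝ E ≤ 2 * finrank ℝ F) (hf : ∀ x ∈ s, ContDiffAt ℝ 2 f x)
    (hf' : ∀ x ∈ s, fderiv ℝ f x = 0)
    (hf'' : ∀ x ∈ s, fderiv ℝ (fderiv ℝ f) x = 0) : ν (f '' s) = 0 := by
  borelize E
  let μ : Measure E := Measure.addHaar
  have hcover : s = ⋃ n : ℕ, s ∩ closedBall 0 n := by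
    rw [← inter_iUnion, iUnion_closedBall_nat, inter_univ]
  rw [hcover, image_iUnion, measure_iUnion_null_iff]
  intro n
  set C := ν (ball 0 1) / μ (ball 0 1) * μ (s ∩ closedBall 0 n)
  have hC : C ≠ ⊤ := ENNReal.mul_ne_top
    (ENNReal.div_ne_top measure_ball_lt_top.ne (measure_ball_pos μ 0 one_pos).ne')
    (measure_ne_top_of_subset inter_subset_right measure_closedBall_lt_top.ne)
  have hle : ∀ c : ℝ≥0, 0 < c → ν (f '' (s ∩ closedBall 0 n)) ≤ (c : ℝ≥0∞) ^ finrank ℝ F * C := by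
    intro c hc
    rw [← mul_assoc]
    refine measure_image_le_of_nnnorm_fderiv_fderiv_lt ν μ hEF (fun x hx => hf x hx.1)
      (fun x hx => hf' x hx.1) fun x hx => ?_
    simpa only [hf'' x hx.1, nnnorm_zero (E := E →L[ℝ] E →L[ℝ] F)] using hc
  have hlim : Tendsto (fun c : ℝ≥0 => (c : ℝ≥0∞) ^ finrank ℝ F * C) (𝓝[>] 0) (𝓝 0) := by
    have hcont : Continuous fun c : ℝ≥0 => (c : ℝ≥0∞) ^ finrank ℝ F * C := by fun_prop
    refine (hcont.tendsto' 0 0 ?_).mono_left nhdsWithin_le_nhds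
    simp [finrank_pos.ne']
  exact nonpos_iff_eq_zero.1 (ge_of_tendsto hlim (eventually_nhdsWithin_of_forall hle))

lemma measure_image_eq_zero_of_fderiv_eq_zero [Nontrivial F]
    (hEF : finrank ℝ E ≤ 2 * finrank ℝ F) (hf : ∀ x ∈ s, ContDiffAt ℝ 2 f x)
    (hf' : ∀ x ∈ s, fderiv ℝ f x = 0) :
    ν (f '' s) = 0 := by
  borelize E
  have hnull : ν (f '' {x ∈ s | fderiv ℝ (fderiv ℝ f) x ≠ 0}) = 0 :=
    measure_image_eq_zero_of_fderiv_eq_zero_of_null ν Measure.addHaar hEF (fun x hx => hf x hx.1)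
      (fun x hx => hf' x hx.1) (measure_setOf_fderiv_ne_zero Measure.addHaar hf')
  have hflat : ν (f '' {x ∈ s | fderiv ℝ (fderiv ℝ f) x = 0}) = 0 :=
    measure_image_eq_zero_of_fderiv_fderiv_eq_zero ν hEF (fun x hx => hf x hx.1)
      (fun x hx => hf' x hx.1) fun x hx => hx.2
  have hcover : s = {x ∈ s | fderiv ℝ (fderiv ℝ f) x = 0} ∪
      {x ∈ s | fderiv ℝ (fderiv ℝ f) x ≠ 0} := by
    rw [← sep_or, sep_eq_self_iff_mem_true.2 fun x _ => em _]
  rw [hcover, image_union]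
  exact measure_union_null hflat hnull

end ZeroDerivative

section LinearAlgebra

lemma ker_comp_le_ker_of_finrank_range_le {𝕜 E F R : Type*} [DivisionRing 𝕜]
    [AddCommGroup E] [Module 𝕜 E] [FiniteDimensional 𝕜 E] [AddCommGroup F] [Module 𝕜 F]
    [AddCommGroup R] [Module 𝕜 R] {L : E →ₗ[𝕜] F} {p : F →ₗ[𝕜] R}
    (hsurj : Function.Surjective (p ∘ₗ L))
    (hrank : finrank 𝕜 (LinearMap.range L) ≤ finrank 𝕜 R) :
    LinearMap.ker (p ∘ₗ L) ≤ LinearMap.ker L := by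
  have hL := L.finrank_range_add_finrank_ker
  have hpL := (p ∘ₗ L).finrank_range_add_finrank_ker
  rw [LinearMap.range_eq_top.2 hsurj, finrank_top] at hpL
  refine (Submodule.eq_of_le_of_finrank_le (LinearMap.ker_le_ker_comp L p) ?_).ge
  lia

-- `M` plays the role of the derivative of the inverse of a chart with first component `ρ`, so that
-- `M ∘ inr` parametrises the kernel of `L = Dρ`.
lemma surjective_comp_inr_of_comp_eq_fst {𝕜 A W P K : Type*} [Ring 𝕜]
    [AddCommGroup A] [Module 𝕜 A] [AddCommGroup W] [Module 𝕜 W]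
    [AddCommGroup P] [Module 𝕜 P] [AddCommGroup K] [Module 𝕜 K]
    {L : A × W →ₗ[𝕜] P} {M : P × K →ₗ[𝕜] A × W} (hLM : L ∘ₗ M = LinearMap.fst 𝕜 P K)
    (hM : Function.Surjective (LinearMap.fst 𝕜 A W ∘ₗ M ∘ₗ LinearMap.inr 𝕜 P K)) :
    Function.Surjective (L ∘ₗ LinearMap.inr 𝕜 A W) := by
  intro v
  obtain ⟨s, hs⟩ := hM (M (v, 0)).1
  have hfst : (M (v, -s)).1 = 0 := by
    have hsub : (v, -s) = (v, 0) - (0, s) := by simp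
    rw [hsub, map_sub, Prod.fst_sub, ← hs]
    exact sub_self _
  refine ⟨(M (v, -s)).2, ?_⟩
  have hinr : LinearMap.inr 𝕜 A W (M (v, -s)).2 = M (v, -s) := Prod.ext hfst.symm rfl
  rw [LinearMap.comp_apply, hinr]
  exact DFunLike.congr_fun hLM (v, -s)

end LinearAlgebra

section FDeriv

variable {𝕜 : Type*} [NontriviallyNormedField 𝕜]

lemma fderiv_comp_fderiv_symm_eq_fst {E G K : Type*} [NormedAddCommGroup E] [NormedSpace 𝕜 E]
    [NormedAddCommGroup G] [NormedSpace 𝕜 G] [NormedAddCommGroup K] [NormedSpace 𝕜 K]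
    {h : E → G} {e : OpenPartialHomeomorph E (G × K)}
    (he : ∀ x, (e x).1 = h x) {p : G × K} (hp : p ∈ e.target)
    (hh : DifferentiableAt 𝕜 h (e.symm p)) (he' : DifferentiableAt 𝕜 e.symm p) :
    fderiv 𝕜 h (e.symm p) ∘L fderiv 𝕜 e.symm p = ContinuousLinearMap.fst 𝕜 G K := by
  have heq : h ∘ e.symm =ᶠ[𝓝 p] Prod.fst := by
    filter_upwards [e.open_target.mem_nhds hp] with y hy
    rw [Function.comp_apply, ← he, e.right_inv hy]
  rw [← fderiv_comp p hh he', heq.fderiv_eq, fderiv_fst]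

lemma fderiv_comp_prodMk {A W P : Type*} [NormedAddCommGroup A] [NormedSpace 𝕜 A]
    [NormedAddCommGroup W] [NormedSpace 𝕜 W] [NormedAddCommGroup P] [NormedSpace 𝕜 P]
    {ρ : A × W → P} {a : A} {w : W} (hρ : DifferentiableAt 𝕜 ρ (a, w)) :
    fderiv 𝕜 (fun w => ρ (a, w)) w = fderiv 𝕜 ρ (a, w) ∘L ContinuousLinearMap.inr 𝕜 A W :=
  (hρ.hasFDerivAt.comp w (hasFDerivAt_prodMk_right a w)).fderiv

lemma fderiv_snd_comp_symm_comp_inr_eq_zero {E R Q K : Type*}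
    [NormedAddCommGroup E] [NormedSpace 𝕜 E] [FiniteDimensional 𝕜 E]
    [NormedAddCommGroup R] [NormedSpace 𝕜 R] [FiniteDimensional 𝕜 R]
    [NormedAddCommGroup Q] [NormedSpace 𝕜 Q]
    [NormedAddCommGroup K] [NormedSpace 𝕜 K] [FiniteDimensional 𝕜 K]
    {f : E → R × Q} {e : OpenPartialHomeomorph E (R × K)} (he : ∀ x, (e x).1 = (f x).1)
    {p : R × K} (hp : p ∈ e.target) (hf : DifferentiableAt 𝕜 f (e.symm p))
    (he' : DifferentiableAt 𝕜 e.symm p)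
    (hrank : finrank 𝕜 (fderiv 𝕜 f (e.symm p)).range ≤ finrank 𝕜 R) :
    fderiv 𝕜 (fun p => (f (e.symm p)).2) p ∘L ContinuousLinearMap.inr 𝕜 R K = 0 := by
  set L := fderiv 𝕜 f (e.symm p) ∘L fderiv 𝕜 e.symm p
  have hfst : ContinuousLinearMap.fst 𝕜 R Q ∘L L = ContinuousLinearMap.fst 𝕜 R K := by
    rw [← fderiv_comp_fderiv_symm_eq_fst he hp hf.fst he', hf.hasFDerivAt.fst.fderiv]
    rfl
  have hfst' : LinearMap.fst 𝕜 R Q ∘ₗ (L : R × K →ₗ[𝕜] R × Q) = LinearMap.fst 𝕜 R K :=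
    congrArg ContinuousLinearMap.toLinearMap hfst
  have hker := ker_comp_le_ker_of_finrank_range_le (L := (L : R × K →ₗ[𝕜] R × Q))
    (p := LinearMap.fst 𝕜 R Q) (hfst' ▸ LinearMap.fst_surjective)
    ((Submodule.finrank_mono (LinearMap.range_comp_le_range _ _)).trans hrank)
  have hsnd : fderiv 𝕜 (fun p => (f (e.symm p)).2) p = ContinuousLinearMap.snd 𝕜 R Q ∘L L :=
    ((hf.hasFDerivAt.comp p he'.hasFDerivAt).snd).fderiv
  rw [hfst'] at hker
  ext s
  have hLs : L (0, s) = 0 := hker (LinearMap.mem_ker.2 rfl)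
  rw [hsnd]
  exact congrArg Prod.snd hLs

end FDeriv

lemma exists_openPartialHomeomorph_fst_eq {E G : Type*}
    [NormedAddCommGroup E] [NormedSpace ℝ E] [CompleteSpace E]
    [NormedAddCommGroup G] [NormedSpace ℝ G] [FiniteDimensional ℝ G]
    {h : E → G} {x₀ : E} {n : ℕ∞ω} (hn₀ : n ≠ 0) (hn : n ≠ (∞ : ℕ∞ω))
    (hh : ContDiffAt ℝ n h x₀) (hsurj : Function.Surjective (fderiv ℝ h x₀)) :
    ∃ e : OpenPartialHomeomorph E (G × (fderiv ℝ h x₀).ker),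
      x₀ ∈ e.source ∧ (∀ x, (e x).1 = h x) ∧ ∀ p ∈ e.target, ContDiffAt ℝ n e.symm p := by
  obtain ⟨B, hB⟩ :=
    (fderiv ℝ h x₀).exists_rightInverse_of_surjective (LinearMap.range_eq_top.2 hsurj)
  have hB : Function.RightInverse B (fderiv ℝ h x₀) := DFunLike.congr_fun hB
  let π := (fderiv ℝ h x₀).projKerOfRightInverse B hB
  have hΦ : ContDiffAt ℝ n (fun x => (h x, π x)) x₀ := hh.prodMk π.contDiff.contDiffAt
  have hΦ' : HasFDerivAt (fun x => (h x, π x))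
      (ContinuousLinearEquiv.equivOfRightInverse _ B hB : E →L[ℝ] G × (fderiv ℝ h x₀).ker) x₀ :=
    (hh.differentiableAt hn₀).hasFDerivAt.prodMk π.hasFDerivAt
  let e := hΦ.toOpenPartialHomeomorph _ hΦ' hn₀
  have hx₀ : x₀ ∈ e.source := hΦ.mem_toOpenPartialHomeomorph_source hΦ' hn₀
  refine ⟨e.restrContDiff ℝ n hn, ?_, fun x => rfl, fun p hp => hp.2.1⟩
  exact ⟨hx₀, hΦ, hΦ.to_localInverse hΦ' hn₀⟩

section Fubini

variable {R K Q : Type*} [NormedAddCommGroup R] [NormedSpace ℝ R]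
  [NormedAddCommGroup K] [NormedSpace ℝ K] [FiniteDimensional ℝ K]
  [NormedAddCommGroup Q] [NormedSpace ℝ Q] [FiniteDimensional ℝ Q] [Nontrivial Q]
  [MeasurableSpace R] [BorelSpace R] (μ : Measure R)
  [MeasurableSpace Q] [BorelSpace Q] (ν : Measure Q) [ν.IsAddHaarMeasure]

lemma measure_prod_image_graph_eq_zero {g : R × K → Q} {N : Set (R × K)} (hN : IsCompact N)
    (hKQ : finrank ℝ K ≤ 2 * finrank ℝ Q) (hg : ∀ p ∈ N, ContDiffAt ℝ 2 g p) :
    μ.prod ν ((fun p => (p.1, g p)) ''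
      {p ∈ N | fderiv ℝ g p ∘L ContinuousLinearMap.inr ℝ R K = 0}) = 0 := by
  set C := {p ∈ N | fderiv ℝ g p ∘L ContinuousLinearMap.inr ℝ R K = 0}
  have hg' : ContinuousOn (fun p => fderiv ℝ g p ∘L ContinuousLinearMap.inr ℝ R K) N :=
    fun p hp => (((hg p hp).continuousAt_fderiv (by simp)).clm_comp
      continuousAt_const).continuousWithinAt
  have hCcompact : IsCompact C :=
    hN.of_isClosed_subset (hg'.preimage_isClosed_of_isClosed hN.isClosed isClosed_singleton)
      (sep_subset _ _)
  have himage : IsCompact ((fun p => (p.1, g p)) '' C) := hCcompact.image_of_continuousOn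
    fun p hp => (continuousAt_fst.prodMk (hg p hp.1).continuousAt).continuousWithinAt
  refine (Measure.measure_prod_null himage.measurableSet).2 (Eventually.of_forall fun r => ?_)
  have hslice : Prod.mk r ⁻¹' ((fun p => (p.1, g p)) '' C) ⊆
      (fun s => g (r, s)) '' {s | (r, s) ∈ C} := by
    rintro q ⟨⟨r', s⟩, hp, hq⟩
    obtain ⟨rfl, rfl⟩ := Prod.mk.inj hq
    exact ⟨s, hp, rfl⟩
  refine measure_mono_null hslice (measure_image_eq_zero_of_fderiv_eq_zero ν hKQ ?_ ?_)
  · exact fun s hs => (hg _ hs.1).comp s (contDiffAt_const.prodMk contDiffAt_id)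
  · exact fun s hs => (fderiv_comp_prodMk ((hg _ hs.1).differentiableAt (by simp))).trans hs.2

end Fubini

section Sard

variable {E F : Type*} [NormedAddCommGroup E] [NormedSpace ℝ E]
  [NormedAddCommGroup F] [NormedSpace ℝ F]

lemma exists_continuousLinearEquiv_prod_range [FiniteDimensional ℝ F] (L : E →L[ℝ] F) :
    ∃ (Q : Submodule ℝ F) (T : F ≃L[ℝ] L.range × Q), ∀ x, (T (L x)).1 = L.rangeRestrict x := by
  obtain ⟨Q, hQ⟩ := L.range.exists_isCompl
  refine ⟨Q, (L.range.prodEquivOfIsCompl Q hQ).symm.toContinuousLinearEquiv, fun x => ?_⟩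
  exact congrArg Prod.fst (Submodule.prodEquivOfIsCompl_symm_apply_left _ _ hQ (L.rangeRestrict x))

lemma measure_eq_zero_of_measure_image_continuousLinearEquiv [FiniteDimensional ℝ F]
    [MeasurableSpace F] [BorelSpace F] (ν : Measure F) [ν.IsAddHaarMeasure]
    {F' : Type*} [NormedAddCommGroup F'] [NormedSpace ℝ F'] [MeasurableSpace F'] [BorelSpace F']
    {ν' : Measure F'} [ν'.IsAddHaarMeasure] (T : F ≃L[ℝ] F') {s : Set F}
    (hs : ν' (T '' s) = 0) : ν s = 0 := by
  have : FiniteDimensional ℝ F' := T.toLinearEquiv.finiteDimensional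
  have hac : ν.map T ≪ ν' := Measure.absolutelyContinuous_isAddHaarMeasure _ _
  have hmap : ν.map T.toHomeomorph.toMeasurableEquiv (T '' s) = 0 := hac hs
  rw [MeasurableEquiv.map_apply] at hmap
  exact measure_mono_null (subset_preimage_image T s) hmap

variable [FiniteDimensional ℝ E]

lemma exists_nhds_prod_measure_image_rank_le_eq_zero {R Q : Type*}
    [NormedAddCommGroup R] [NormedSpace ℝ R] [FiniteDimensional ℝ R]
    [NormedAddCommGroup Q] [NormedSpace ℝ Q] [FiniteDimensional ℝ Q]
    [Nontrivial Q] [MeasurableSpace R] [BorelSpace R] (μ : Measure R)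
    [MeasurableSpace Q] [BorelSpace Q] (ν : Measure Q) [ν.IsAddHaarMeasure]
    {f : E → R × Q} {x₀ : E} (hf : ContDiffAt ℝ 2 f x₀)
    (hsurj : Function.Surjective (fderiv ℝ (fun x => (f x).1) x₀))
    (hdim : finrank ℝ E ≤ finrank ℝ R + 2 * finrank ℝ Q) :
    ∃ u ∈ 𝓝 x₀, μ.prod ν (f '' {x ∈ u | finrank ℝ (fderiv ℝ f x).range ≤ finrank ℝ R}) = 0 := by
  obtain ⟨e, hx₀, he, hsymm⟩ := exists_openPartialHomeomorph_fst_eq two_ne_zero (by simp)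
    hf.fst hsurj
  have hker : finrank ℝ (fderiv ℝ (fun x => (f x).1) x₀).ker ≤ 2 * finrank ℝ Q := by
    have hrank := (fderiv ℝ (fun x => (f x).1) x₀).toLinearMap.finrank_range_add_finrank_ker
    rw [LinearMap.range_eq_top.2 hsurj, finrank_top] at hrank
    lia
  have hfC : ∀ᶠ p in 𝓝 (e x₀), p ∈ e.target ∧ ContDiffAt ℝ 2 f (e.symm p) := by
    have htarget : ∀ᶠ p in 𝓝 (e x₀), p ∈ e.target :=
      e.open_target.mem_nhds (e.map_source hx₀)
    exact htarget.and ((e.tendsto_symm hx₀).eventually (hf.eventually (by simp)))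
  obtain ⟨N, hN, hNsub, hNcompact⟩ := local_compact_nhds hfC
  refine ⟨e.source ∩ e ⁻¹' N, inter_mem (e.open_source.mem_nhds hx₀)
    ((e.continuousAt hx₀).preimage_mem_nhds hN), ?_⟩
  refine measure_mono_null ?_ (measure_prod_image_graph_eq_zero μ ν hNcompact hker
    (g := fun p => (f (e.symm p)).2)
    fun p hp => ((hNsub hp).2.comp p (hsymm p (hNsub hp).1)).snd)
  rintro _ ⟨x, ⟨⟨hxs, hxN⟩, hrank⟩, rfl⟩
  obtain ⟨htarget, hfx⟩ := hNsub hxN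
  have hx : e.symm (e x) = x := e.left_inv hxs
  refine ⟨e x, ⟨hxN, fderiv_snd_comp_symm_comp_inr_eq_zero he htarget
    (hfx.differentiableAt two_ne_zero) ((hsymm _ htarget).differentiableAt two_ne_zero) ?_⟩, ?_⟩
  · rwa [hx]
  · exact Prod.ext (he x) (congrArg (fun x => (f x).2) hx)

variable [FiniteDimensional ℝ F] [MeasurableSpace F] [BorelSpace F]
  (ν : Measure F) [ν.IsAddHaarMeasure] {f : E → F}

lemma exists_nhds_measure_image_rank_le_eq_zero {x₀ : E} (hf : ContDiffAt ℝ 2 f x₀)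
    (hrank : finrank ℝ (fderiv ℝ f x₀).range < finrank ℝ F)
    (hdim : finrank ℝ E + finrank ℝ (fderiv ℝ f x₀).range ≤ 2 * finrank ℝ F) :
    ∃ u ∈ 𝓝 x₀, ν (f '' {x ∈ u |
      finrank ℝ (fderiv ℝ f x).range ≤ finrank ℝ (fderiv ℝ f x₀).range}) = 0 := by
  obtain ⟨Q, T, hT⟩ := exists_continuousLinearEquiv_prod_range (fderiv ℝ f x₀)
  have hRQ : finrank ℝ F = finrank ℝ (fderiv ℝ f x₀).range + finrank ℝ Q := by
    rw [T.toLinearEquiv.finrank_eq, finrank_prod]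
  have : Nontrivial Q := (finrank_pos_iff (R := ℝ)).1 (by lia)
  have hsurj : Function.Surjective (fderiv ℝ (fun x => ((T ∘ f) x).1) x₀) := by
    have hfst : fderiv ℝ (fun x => ((T ∘ f) x).1) x₀ = (fderiv ℝ f x₀).rangeRestrict := by
      rw [(T.hasFDerivAt.comp x₀ (hf.differentiableAt two_ne_zero).hasFDerivAt).fst.fderiv]
      exact ContinuousLinearMap.ext hT
    rw [hfst]
    exact (fderiv ℝ f x₀).toLinearMap.surjective_rangeRestrict
  have hrankT : ∀ x, finrank ℝ (fderiv ℝ (T ∘ f) x).range = finrank ℝ (fderiv ℝ f x).range := by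
    intro x
    rw [T.comp_fderiv]
    exact (congrArg (fun S : Submodule ℝ _ => finrank ℝ S)
      (LinearMap.range_comp _ _)).trans (T.toLinearEquiv.finrank_map_eq _)
  obtain ⟨u, hu, hnull⟩ := exists_nhds_prod_measure_image_rank_le_eq_zero
    (Measure.addHaar : Measure (fderiv ℝ f x₀).range)
    (Measure.addHaar : Measure Q) (T.contDiff.contDiffAt.comp x₀ hf) hsurj (by lia)
  refine ⟨u, hu, measure_eq_zero_of_measure_image_continuousLinearEquiv ν
    (ν' := Measure.prod Measure.addHaar Measure.addHaar) T ?_⟩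
  simpa only [hrankT, image_comp] using hnull

theorem measure_image_eq_zero_of_not_surjective_fderiv {s : Set E}
    (hEF : finrank ℝ E ≤ finrank ℝ F + 1) (hf : ∀ x ∈ s, ContDiffAt ℝ 2 f x)
    (hs : ∀ x ∈ s, ¬Function.Surjective (fderiv ℝ f x)) :
    ν (f '' s) = 0 := by
  have hstrata : s = ⋃ k : ℕ, {x ∈ s | finrank ℝ (fderiv ℝ f x).range = k} := by
    ext x
    simp
  rw [hstrata, image_iUnion, measure_iUnion_null_iff]
  refine fun k => measure_image_eq_zero_of_locally_null ν fun x ⟨hxs, hxk⟩ => ?_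
  have hlt : finrank ℝ (fderiv ℝ f x).range < finrank ℝ F :=
    Submodule.finrank_lt fun htop => hs x hxs (LinearMap.range_eq_top.1 htop)
  obtain ⟨u, hu, hnull⟩ := exists_nhds_measure_image_rank_le_eq_zero ν (hf x hxs) hlt (by lia)
  refine ⟨_, inter_mem self_mem_nhdsWithin (mem_nhdsWithin_of_mem_nhds hu), ?_⟩
  refine measure_mono_null (image_mono ?_) hnull
  exact fun z hz => ⟨hz.2, (hz.1.2.trans hxk.symm).le⟩

end Sard

section Transversality

variable {A W P : Type*} [NormedAddCommGroup A] [NormedSpace ℝ A]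
  [NormedAddCommGroup W] [NormedSpace ℝ W] [NormedAddCommGroup P] [NormedSpace ℝ P] {ρ : A × W → P}

lemma not_surjective_fderiv_fst_comp_symm {K : Type*} [NormedAddCommGroup K] [NormedSpace ℝ K]
    {e : OpenPartialHomeomorph (A × W) (P × K)} (he : ∀ z, (e z).1 = ρ z) {z : A × W}
    (hz : z ∈ e.source) (hz₀ : ρ z = 0) (hρ : DifferentiableAt ℝ ρ z)
    (he' : DifferentiableAt ℝ e.symm (e z))
    (hcrit : ¬Function.Surjective (fderiv ℝ (fun w => ρ (z.1, w)) z.2)) :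
    ¬Function.Surjective (fderiv ℝ (fun s => (e.symm (0, s)).1) (e z).2) := by
  have hez : (0, (e z).2) = e z := Prod.ext (hz₀.symm.trans (he z).symm) rfl
  have hLM : fderiv ℝ ρ z ∘L fderiv ℝ e.symm (e z) = ContinuousLinearMap.fst ℝ P K := by
    have hsymm := e.left_inv hz
    have hcomp := fderiv_comp_fderiv_symm_eq_fst he (e.map_source hz) (hsymm.symm ▸ hρ) he'
    rwa [hsymm] at hcomp
  rw [← hez] at he' hLM
  have hfst : fderiv ℝ (fun s => (e.symm (0, s)).1) (e z).2 = ContinuousLinearMap.fst ℝ A W ∘L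
      fderiv ℝ e.symm (0, (e z).2) ∘L ContinuousLinearMap.inr ℝ P K :=
    (he'.hasFDerivAt.comp _ (hasFDerivAt_prodMk_right 0 (e z).2)).fst.fderiv
  rw [hfst]
  refine fun hsurj => hcrit ?_
  rw [fderiv_comp_prodMk hρ]
  exact surjective_comp_inr_of_comp_eq_fst (congrArg ContinuousLinearMap.toLinearMap hLM) hsurj

variable [FiniteDimensional ℝ A] [MeasurableSpace A] [BorelSpace A] (μ : Measure A)
  [μ.IsAddHaarMeasure] [FiniteDimensional ℝ W] [FiniteDimensional ℝ P]

lemma exists_nhds_measure_fst_image_critical_zeros_eq_zero {z₀ : A × W}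
    (hWP : finrank ℝ W ≤ finrank ℝ P + 1) (hρ : ContDiffAt ℝ 2 ρ z₀)
    (hsurj : Function.Surjective (fderiv ℝ ρ z₀)) :
    ∃ u ∈ 𝓝 z₀, μ (Prod.fst '' {z ∈ u | ρ z = 0 ∧
      ¬Function.Surjective (fderiv ℝ (fun w => ρ (z.1, w)) z.2)}) = 0 := by
  obtain ⟨e, hz₀, he, hsymm⟩ :=
    exists_openPartialHomeomorph_fst_eq two_ne_zero (by simp) hρ hsurj
  have hdim : finrank ℝ (fderiv ℝ ρ z₀).ker ≤ finrank ℝ A + 1 := by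
    have hrank := (fderiv ℝ ρ z₀).toLinearMap.finrank_range_add_finrank_ker
    rw [LinearMap.range_eq_top.2 hsurj, finrank_top, finrank_prod] at hrank
    lia
  refine ⟨e.source ∩ {z | DifferentiableAt ℝ ρ z}, inter_mem (e.open_source.mem_nhds hz₀)
    ((hρ.eventually (by simp)).mono fun z hz => hz.differentiableAt two_ne_zero), ?_⟩
  have hsard : μ ((fun s => (e.symm (0, s)).1) '' {s | (0, s) ∈ e.target ∧
      ¬Function.Surjective (fderiv ℝ (fun s => (e.symm (0, s)).1) s)}) = 0 :=
    measure_image_eq_zero_of_not_surjective_fderiv μ hdim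
      (fun s hs => ((hsymm _ hs.1).comp s (contDiffAt_const.prodMk contDiffAt_id)).fst)
      fun s hs => hs.2
  refine measure_mono_null ?_ hsard
  rintro _ ⟨z, ⟨⟨hz, hdiff⟩, hzero, hcrit⟩, rfl⟩
  have hez : (0, (e z).2) = e z := Prod.ext (hzero.symm.trans (he z).symm) rfl
  have htarget := e.map_source hz
  refine ⟨(e z).2, ⟨hez ▸ htarget, not_surjective_fderiv_fst_comp_symm he hz hzero hdiff
    ((hsymm _ htarget).differentiableAt two_ne_zero) hcrit⟩, ?_⟩
  exact congrArg Prod.fst ((congrArg e.symm hez).trans (e.left_inv hz))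

theorem almost_every_section_has_zero_as_regular_value_general {Ω : Set (A × W)} (hΩ : IsOpen Ω)
    (hWP : finrank ℝ W ≤ finrank ℝ P + 1) (hρ : ContDiffOn ℝ 2 ρ Ω)
    (hreg : ∀ z ∈ Ω, ρ z = 0 → Function.Surjective (fderiv ℝ ρ z)) :
    ∀ᵐ a ∂μ, ∀ w, (a, w) ∈ Ω → ρ (a, w) = 0 →
      Function.Surjective (fderiv ℝ (fun w => ρ (a, w)) w) := by
  have hnull : μ (Prod.fst '' {z ∈ Ω | ρ z = 0 ∧
      ¬Function.Surjective (fderiv ℝ (fun w => ρ (z.1, w)) z.2)}) = 0 := by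
    refine measure_image_eq_zero_of_locally_null μ fun z ⟨hz, hzero, _⟩ => ?_
    obtain ⟨u, hu, hu₀⟩ := exists_nhds_measure_fst_image_critical_zeros_eq_zero μ hWP
      (hρ.contDiffAt (hΩ.mem_nhds hz)) (hreg z hz hzero)
    refine ⟨_, inter_mem self_mem_nhdsWithin (mem_nhdsWithin_of_mem_nhds hu), ?_⟩
    refine measure_mono_null (image_mono ?_) hu₀
    exact fun z' hz' => ⟨hz'.2, hz'.1.2⟩
  filter_upwards [compl_mem_ae_iff.2 hnull] with a ha w hw hzero
  by_contra hcrit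
  exact ha ⟨(a, w), ⟨hw, hzero, hcrit⟩, rfl⟩

end Transversality

/-- parametrised transversality of Chow–Mallet-Paret–Yorke: if
`ρ : ℝ^q × ((0,1) × ℝ^p) → ℝ^p` is C² and `0` is a regular value of `ρ`, then for
Lebesgue-almost every `a ∈ ℝ^q`, `0` is a regular value of the section
`ρ_a = ρ(a, ·, ·) : (0,1) × ℝ^p → ℝ^p`. -/
theorem almost_every_section_has_zero_as_regular_value
    {q p : ℕ} (ρ : (Fin q → ℝ) × (ℝ × (Fin p → ℝ)) → Fin p → ℝ)
    (hρ : ContDiffOn ℝ 2 ρ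
      ((Set.univ : Set (Fin q → ℝ)) ×ˢ (Set.Ioo (0 : ℝ) 1 ×ˢ (Set.univ : Set (Fin p → ℝ)))))
    (hreg : ∀ z ∈ (Set.univ : Set (Fin q → ℝ)) ×ˢ
        (Set.Ioo (0 : ℝ) 1 ×ˢ (Set.univ : Set (Fin p → ℝ))),
      ρ z = 0 → Function.Surjective (fderiv ℝ ρ z)) :
    ∀ᵐ a ∂(volume : Measure (Fin q → ℝ)),
      ∀ lam ∈ Set.Ioo (0 : ℝ) 1, ∀ y : Fin p → ℝ,
        ρ (a, (lam, y)) = 0 →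
        Function.Surjective
          (fderiv ℝ (fun w : ℝ × (Fin p → ℝ) => ρ (a, w)) (lam, y)) := by
  filter_upwards [almost_every_section_has_zero_as_regular_value_general volume
    (isOpen_univ.prod (isOpen_Ioo.prod isOpen_univ)) (by simp [add_comm]) hρ hreg] with a ha
  exact fun lam hlam y => ha (lam, y) ⟨trivial, hlam, trivial⟩
end

section
/- Let p ∈ ℕ and let H: [0,1) × ℝ^p → ℝ^p be continuous, and continuously differentiable on (0,1) × ℝ^p with 0 a regular value of the restriction of H to (0,1) × ℝ^p. Suppose there is exactly one point z₀ = (0, x₀) with H(z₀) = 0 whose first coordinate is 0, and that the partial Jacobian ∇ₓH(0, x₀) ∈ ℝ^{p×p} is nonsingular. Let C be the connected component of H⁻¹(0) containing z₀. If C is a bounded subset of [0,1) × ℝ^p, then sup{ λ : (λ, x) ∈ C } = 1; i.e., the zero curve of H emanating from z₀ cannot loop back to the level λ = 0 nor terminate at an intermediate parameter value, and must approach the level λ = 1. -/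
/-!
The proof is a degree argument carried out with differential forms. Let `φ` be a bump function
around `0 ∈ ℝ^p` and let `G` be a smooth homotopy on a bounded open set `U` none of whose zeros lie
on `∂U`. If `φ` has small enough support, then by Stokes' theorem the integral of `G^*(φ vol)` over
the slice of `U` at parameter `λ` does not depend on `λ`, because `G^*(φ vol)` is closed and
vanishes near `∂U`. All slices beyond the bounded set `U` are empty, so if `G` starts out as the
projection `(λ, x) ↦ x` and `U` starts out around `0`, where the integral is positive, `G` must
have a zero on `∂U`; by approximation this also holds for continuous homotopies.

If the component `C` of `(0, x₀)` stayed below a level `b < 1`, it would lie in a bounded open set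
`O` without zeros on its boundary whose slice at `0` is a small neighbourhood of `x₀`. There
`(∇ₓH)⁻¹ H(0, x)` is joined to `x - x₀` by a straight line without further zeros, so prepending
this straight line to `H` gives a contradiction.
-/

open Set Filter Topology MeasureTheory Module

section Indicator

variable {X F : Type*} [TopologicalSpace X] [Zero F] {s : Set X} {f : X → F} {x : X}

theorem indicator_eventuallyEq_of_mem (hf : ∀ y ∈ frontier s, f =ᶠ[𝓝 y] 0) (hx : x ∈ s) :
    s.indicator f =ᶠ[𝓝 x] f := by
  by_cases hxi : x ∈ interior s
  · filter_upwards [mem_interior_iff_mem_nhds.1 hxi] with y hy using indicator_of_mem hy f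
  · filter_upwards [hf x ⟨subset_closure hx, hxi⟩] with y hy
    rw [indicator_apply_eq_self.2 fun _ => hy]

theorem indicator_eventuallyEq_zero_of_notMem (hf : ∀ y ∈ frontier s, f =ᶠ[𝓝 y] 0) (hx : x ∉ s) :
    s.indicator f =ᶠ[𝓝 x] 0 := by
  by_cases hxc : x ∈ closure s
  · filter_upwards [hf x ⟨hxc, fun h => hx (interior_subset h)⟩] with y hy
    exact indicator_apply_eq_zero.2 fun _ => hy
  · filter_upwards [isClosed_closure.isOpen_compl.mem_nhds hxc] with y hy
    exact indicator_of_notMem (fun h => hy (subset_closure h)) f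

end Indicator

section Stokes

variable {E F : Type*} [NormedAddCommGroup E] [NormedSpace ℝ E] [NormedAddCommGroup F]
  [NormedSpace ℝ F] [MeasurableSpace E] {μ : Measure E} {n : ℕ} {ω : E → E [⋀^Fin n]→L[ℝ] F}

theorem integrable_fderiv_apply_of_hasCompactSupport [OpensMeasurableSpace E]
    [IsFiniteMeasureOnCompacts μ] {f : E → F} (hf : ContDiff ℝ 1 f) (hfc : HasCompactSupport f)
    (v : E) : Integrable (fun x => fderiv ℝ f x v) μ :=
  ((hf.continuous_fderiv one_ne_zero).clm_apply continuous_const).integrable_of_hasCompactSupport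
    (hfc.fderiv_apply ℝ v)

variable [BorelSpace E] [FiniteDimensional ℝ E] [μ.IsAddHaarMeasure]

theorem integral_fderiv_apply_eq_zero_of_hasCompactSupport {f : E → F} (hf : ContDiff ℝ 1 f)
    (hfc : HasCompactSupport f) (v : E) : ∫ x, fderiv ℝ f x v ∂μ = 0 := by
  simpa using integral_smul_fderiv_eq_neg_fderiv_smul_of_integrable (𝕜 := ℝ) (μ := μ)
    (f := fun _ => (1 : ℝ)) (g := f) (v := v) (by simp)
    (by simpa using integrable_fderiv_apply_of_hasCompactSupport hf hfc v)
    (by simpa using hf.continuous.integrable_of_hasCompactSupport hfc)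
    (fun _ _ => differentiableAt_const _) (fun x _ => hf.differentiable one_ne_zero x)

theorem integral_extDeriv_apply_eq_zero_of_hasCompactSupport (hd : Differentiable ℝ ω)
    (hω : ∀ u, ContDiff ℝ 1 fun x => ω x u) (hωc : HasCompactSupport ω) (v : Fin (n + 1) → E) :
    ∫ x, extDeriv ω x v ∂μ = 0 := by
  have hc (u : Fin n → E) : HasCompactSupport fun x => ω x u :=
    hωc.comp_left (g := fun α : E [⋀^Fin n]→L[ℝ] F => α u) rfl
  simp_rw [fun x => extDeriv_apply (hd x) v, ← Int.cast_smul_eq_zsmul ℝ]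
  rw [integral_finsetSum _ fun i _ =>
    (integrable_fderiv_apply_of_hasCompactSupport (hω _) (hc _) _).fun_smul _]
  simp_rw [integral_smul, integral_fderiv_apply_eq_zero_of_hasCompactSupport (hω _) (hc _),
    smul_zero, Finset.sum_const_zero]

theorem setIntegral_extDeriv_apply_eq_zero {s : Set E} (hs : MeasurableSet s)
    (hsb : Bornology.IsBounded s) (hd : Differentiable ℝ ω) (hω : ∀ u, ContDiff ℝ 1 fun x => ω x u)
    (hωs : ∀ x ∈ frontier s, ω =ᶠ[𝓝 x] 0) (v : Fin (n + 1) → E) :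
    ∫ x in s, extDeriv ω x v ∂μ = 0 := by
  have hmem {x : E} (hx : x ∈ s) := indicator_eventuallyEq_of_mem hωs hx
  have hnotMem {x : E} (hx : x ∉ s) := indicator_eventuallyEq_zero_of_notMem hωs hx
  have hd' : Differentiable ℝ (s.indicator ω) := fun x => by
    by_cases hx : x ∈ s
    · exact (hd x).congr_of_eventuallyEq (hmem hx)
    · exact (differentiableAt_const 0).congr_of_eventuallyEq (hnotMem hx)
  have hω' (u : Fin n → E) : ContDiff ℝ 1 fun x => s.indicator ω x u :=
    contDiff_iff_contDiffAt.2 fun x => by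
      by_cases hx : x ∈ s
      · exact (hω u).contDiffAt.congr_of_eventuallyEq ((hmem hx).fun_comp (· u))
      · exact (contDiffAt_const (c := 0)).congr_of_eventuallyEq ((hnotMem hx).fun_comp (· u))
  have hωc : HasCompactSupport (s.indicator ω) :=
    .intro hsb.isCompact_closure fun x hx => indicator_of_notMem (fun h => hx (subset_closure h)) ω
  have hext : (fun x => extDeriv (s.indicator ω) x v) = s.indicator fun x => extDeriv ω x v := by
    ext x
    by_cases hx : x ∈ s
    · rw [indicator_of_mem hx, (hmem hx).extDeriv_eq]
    · have hzero : extDeriv (0 : E → E [⋀^Fin n]→L[ℝ] F) x = 0 := by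
        simpa using extDeriv_smul (0 : ℝ) ω (x := x)
      rw [indicator_of_notMem hx, (hnotMem hx).extDeriv_eq, hzero]
      rfl
  rw [← integral_indicator hs, ← hext,
    integral_extDeriv_apply_eq_zero_of_hasCompactSupport hd' hω' hωc]

end Stokes

section Pullback

variable {E F G : Type*} [NormedAddCommGroup E] [NormedSpace ℝ E] [NormedAddCommGroup F]
  [NormedSpace ℝ F] [NormedAddCommGroup G] [NormedSpace ℝ G] {n : ℕ}

theorem extDeriv_fun_smul_apply {f : E → ℝ} {ω : E → E [⋀^Fin n]→L[ℝ] F} {x : E}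
    (hf : DifferentiableAt ℝ f x) (hω : DifferentiableAt ℝ ω x) (v : Fin (n + 1) → E) :
    extDeriv (fun y => f y • ω y) x v =
      ∑ i, (-1) ^ i.val • fderiv ℝ f x (v i) • ω x (i.removeNth v) + f x • extDeriv ω x v := by
  have hωv (u : Fin n → E) : DifferentiableAt ℝ (fun y => ω y u) x :=
    hω.continuousAlternatingMap_apply_const u
  rw [extDeriv_apply (hf.fun_smul hω), extDeriv_apply hω, Finset.smul_sum, ← Finset.sum_add_distrib]
  refine Finset.sum_congr rfl fun i _ => ?_
  simp only [ContinuousAlternatingMap.smul_apply]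
  rw [fderiv_fun_smul hf (hωv _)]
  simp [add_comm, smul_comm (f x)]

theorem extDeriv_pullback_eq_zero_of_finrank_le [FiniteDimensional ℝ F] (hn : finrank ℝ F ≤ n)
    {β : F → F [⋀^Fin n]→L[ℝ] G} {g : E → F} {x : E} (hβ : DifferentiableAt ℝ β (g x))
    (hg : ContDiffAt ℝ 2 g x) :
    extDeriv (fun y => (β (g y)).compContinuousLinearMap (fderiv ℝ g y)) x = 0 := by
  rw [extDeriv_pullback hβ hg (by simp)]
  ext u
  refine AlternatingMap.map_linearDependent (extDeriv β (g x)).toAlternatingMap _ fun hli => ?_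
  have := hli.fintype_card_le_finrank
  rw [Fintype.card_fin] at this
  lia

theorem contDiff_apply_fderiv (vol : F [⋀^Fin n]→L[ℝ] G) {g : E → F} (hg : ContDiff ℝ 2 g)
    (u : Fin n → E) : ContDiff ℝ 1 fun x => vol fun i => fderiv ℝ g x (u i) :=
  vol.toContinuousMultilinearMap.contDiff.comp <| contDiff_pi.2 fun _ =>
    (hg.fderiv_right (m := 1) (by norm_num)).clm_apply contDiff_const

end Pullback

section Slice

variable {E : Type*} [NormedAddCommGroup E] [NormedSpace ℝ E] [FiniteDimensional ℝ E]
  [MeasurableSpace (ℝ × E)] [BorelSpace (ℝ × E)] {μ : Measure (ℝ × E)} [μ.IsAddHaarMeasure]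

theorem setIntegral_deriv_mul_pullback_eq_zero {F : Type*} [NormedAddCommGroup F] [NormedSpace ℝ F]
    [FiniteDimensional ℝ F] {n : ℕ} (hn : finrank ℝ F ≤ n) (vol : F [⋀^Fin n]→L[ℝ] ℝ)
    {G : ℝ × E → F} (hG : ContDiff ℝ 2 G) {φ : F → ℝ} (hφ : ContDiff ℝ 1 φ)
    {ψ : ℝ → ℝ} (hψ : ContDiff ℝ 1 ψ) {U : Set (ℝ × E)} (hU : MeasurableSet U)
    (hUb : Bornology.IsBounded U)
    (h0 : ∀ z ∈ frontier U, ∀ᶠ y in 𝓝 z, ψ y.1 * φ (G y) = 0) (e : Fin n → E) :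
    ∫ z in U, deriv ψ z.1 * (φ (G z) * vol fun i => fderiv ℝ G z (0, e i)) ∂μ = 0 := by
  let β : F → F [⋀^Fin n]→L[ℝ] ℝ := fun y => φ y • vol
  let α : ℝ × E → (ℝ × E) [⋀^Fin n]→L[ℝ] ℝ := fun z =>
    (β (G z)).compContinuousLinearMap (fderiv ℝ G z)
  have hβ : Differentiable ℝ β := (hφ.differentiable one_ne_zero).smul_const vol
  have hβG : Differentiable ℝ fun z => β (G z) := hβ.comp (hG.differentiable two_ne_zero)
  have hα : Differentiable ℝ α := fun z =>
    (hβG z).continuousAlternatingMapCompContinuousLinearMap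
      ((hG.fderiv_right (m := 1) (by norm_num)).differentiable one_ne_zero z)
  have hα_apply (u : Fin n → ℝ × E) : ContDiff ℝ 1 fun z => α z u :=
    (hφ.comp (hG.of_le (by norm_num))).mul (contDiff_apply_fderiv vol hG u)
  have hψ_fst : ContDiff ℝ 1 fun z : ℝ × E => ψ z.1 := hψ.comp contDiff_fst
  have hψ_fderiv (z w : ℝ × E) : fderiv ℝ (fun y : ℝ × E => ψ y.1) z w = deriv ψ z.1 * w.1 := by
    have := ((hψ.differentiable one_ne_zero z.1).hasDerivAt.comp_hasFDerivAt z
      (hasFDerivAt_fst (𝕜 := ℝ) (E := ℝ) (F := E))).fderiv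
    rw [Function.comp_def] at this
    simp [this]
  have hstokes := setIntegral_extDeriv_apply_eq_zero (μ := μ) (ω := fun z => ψ z.1 • α z) hU hUb
    ((hψ_fst.differentiable one_ne_zero).smul hα) (fun u => hψ_fst.mul (hα_apply u))
    (fun z hz => (h0 z hz).mono fun y hy => by ext u; simp [α, β, ← mul_assoc, hy])
    (Fin.cons (1, 0) fun i => (0, e i))
  refine Eq.trans (setIntegral_congr_fun hU fun z _ => ?_) hstokes
  rw [extDeriv_fun_smul_apply (hψ_fst.differentiable one_ne_zero z) (hα z),
    extDeriv_pullback_eq_zero_of_finrank_le hn (hβ _) hG.contDiffAt, Fin.sum_univ_succ]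
  simp [hψ_fderiv, α, β, Fin.removeNth, Function.comp_def]

end Slice

theorem exists_continuousAlternatingMap_apply_eq_one (E : Type*) [NormedAddCommGroup E]
    [NormedSpace ℝ E] [FiniteDimensional ℝ E] :
    ∃ (vol : E [⋀^Fin (finrank ℝ E)]→L[ℝ] ℝ) (e : Fin (finrank ℝ E) → E), vol e = 1 := by
  let b := finBasis ℝ E
  have hcont : Continuous fun v => (b.toMatrix v).det :=
    Continuous.matrix_det <| continuous_matrix fun i j =>
      (b.coord i).continuous_of_finiteDimensional.comp (continuous_apply j)
  exact ⟨{ b.det with cont := hcont }, b, b.det_self⟩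

theorem exists_contDiff_one_support_deriv_eq_Ioo (a b : ℝ) :
    ∃ ψ : ℝ → ℝ, ContDiff ℝ 1 ψ ∧ (∀ t ≤ a, ψ t = 0) ∧ (∀ t, 0 ≤ deriv ψ t) ∧
      Function.support (deriv ψ) = Ioo a b := by
  let f : ℝ → ℝ := fun t => max 0 (min (t - a) (b - t))
  have hf : Continuous f := by fun_prop
  have hf_nonneg (t : ℝ) : 0 ≤ f t := le_max_left _ _
  have hf_zero {t : ℝ} (ht : t ≤ a) : f t = 0 := max_eq_left (min_le_of_left_le (by linarith))
  have hψ' : deriv (fun t => ∫ s in a..t, f s) = f := funext (hf.deriv_integral f a)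
  refine ⟨fun t => ∫ s in a..t, f s, ?_, fun t ht => ?_, fun t => ?_, ?_⟩
  · rw [contDiff_one_iff_deriv, hψ']
    exact ⟨fun t => (hf.integral_hasStrictDerivAt a t).hasDerivAt.differentiableAt, hf⟩
  · refine intervalIntegral.integral_zero_ae (ae_of_all _ fun s hs => hf_zero ?_)
    exact (uIoc_of_ge ht ▸ hs).2
  · rw [hψ']
    exact hf_nonneg t
  · ext t
    rw [hψ', Function.mem_support, ← (hf_nonneg t).lt_iff_ne']
    simp [f]

theorem add_smul_sub_ne_zero_of_norm_sub_lt {E : Type*} [NormedAddCommGroup E]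
    [NormedSpace ℝ E] {v w : E} {t : ℝ} (ht : t ∈ Icc 0 1)
    (h : ‖w - v‖ < ‖v‖) : v + t • (w - v) ≠ 0 := by
  intro h0
  have hle : ‖v‖ ≤ ‖w - v‖ := calc
    ‖v‖ = t * ‖w - v‖ := by
      rw [← Real.norm_of_nonneg ht.1, ← norm_smul, ← norm_neg, ← eq_neg_of_add_eq_zero_right h0]
    _ ≤ ‖w - v‖ := mul_le_of_le_one_left (norm_nonneg _) ht.2
  exact hle.not_gt h

section FrontierZeros

variable {E : Type*} [NormedAddCommGroup E] [NormedSpace ℝ E] [FiniteDimensional ℝ E]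

theorem exists_mem_frontier_norm_le_of_contDiff {G : ℝ × E → E} (hG : ContDiff ℝ 2 G)
    {U : Set (ℝ × E)} (hU : IsOpen U) (hUb : Bornology.IsBounded U) {a b ε : ℝ} (hab : a < b)
    (hε : 0 < ε) (h0 : ∀ t ∈ Ioo a b, (t, 0) ∈ U) (hsnd : ∀ z, z.1 < b → G z = z.2) :
    ∃ z ∈ frontier U, a ≤ z.1 ∧ ‖G z‖ ≤ ε := by
  by_contra! hfr
  borelize (ℝ × E)
  let μ : Measure (ℝ × E) := Measure.addHaar
  obtain ⟨vol, e, hvol⟩ := exists_continuousAlternatingMap_apply_eq_one E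
  obtain ⟨ψ, hψ, hψ0, hψ', hψ_supp⟩ := exists_contDiff_one_support_deriv_eq_Ioo a b
  let φ : ContDiffBump (0 : E) := ⟨ε / 2, ε, by positivity, by linarith⟩
  let f : ℝ × E → ℝ := fun z => deriv ψ z.1 * (φ (G z) * vol fun i => fderiv ℝ G z (0, e i))
  have hf : Continuous f :=
    ((hψ.continuous_deriv le_rfl).comp continuous_fst).mul
      ((φ.continuous.comp hG.continuous).mul (contDiff_apply_fderiv vol hG _).continuous)
  have hf_eq (z : ℝ × E) : f z = deriv ψ z.1 * φ (G z) := by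
    by_cases hzψ : deriv ψ z.1 = 0
    · simp [f, hzψ]
    have hzb : z.1 < b := (hψ_supp.le hzψ).2
    have hG_snd : G =ᶠ[𝓝 z] Prod.snd :=
      (continuous_fst.continuousAt.eventually_lt_const hzb).mono hsnd
    simp [f, hG_snd.fderiv_eq, fderiv_snd, hvol]
  have hf_int : ∫ z in U, f z ∂μ = 0 := by
    refine setIntegral_deriv_mul_pullback_eq_zero le_rfl vol hG φ.contDiff hψ hU.measurableSet hUb
      (fun z hz => ?_) e
    rcases lt_or_ge z.1 a with hza | hza
    · filter_upwards [continuous_fst.continuousAt.eventually_lt_const hza] with y hy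
      rw [hψ0 _ hy.le, zero_mul]
    · filter_upwards [hG.continuous.norm.continuousAt.eventually_const_lt (hfr z hz hza)] with y hy
      rw [φ.zero_of_le_dist (by simpa using hy.le), mul_zero]
  obtain ⟨t, ht⟩ := nonempty_Ioo.2 hab
  have hft : f (t, 0) ≠ 0 := by
    rw [hf_eq, hsnd _ ht.2]
    exact mul_ne_zero (hψ_supp.ge ht) (φ.pos_of_mem_ball (by simpa using hε)).ne'
  have hf_nonneg (z : ℝ × E) : 0 ≤ f z := hf_eq z ▸ mul_nonneg (hψ' _) φ.nonneg
  have hf_integrable : IntegrableOn f U μ :=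
    (hf.continuousOn.integrableOn_compact hUb.isCompact_closure).mono_set subset_closure
  exact hf_int.not_gt <| (setIntegral_pos_iff_support_of_nonneg_ae (ae_of_all _ hf_nonneg)
    hf_integrable).2 <| (hf.isOpen_support.inter hU).measure_pos μ ⟨(t, 0), hft, h0 t ht⟩

theorem exists_zero_mem_frontier_of_eq_snd {K : ℝ × E → E} (hK : Continuous K)
    (hsnd : ∀ z, z.1 ≤ 0 → K z = z.2) {U : Set (ℝ × E)} (hU : IsOpen U)
    (hUb : Bornology.IsBounded U) (h0 : (0, 0) ∈ U) : ∃ z ∈ frontier U, 0 ≤ z.1 ∧ K z = 0 := by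
  by_contra! hfr
  obtain ⟨ρ, hρ, hρU⟩ := Metric.isOpen_iff.1 hU _ h0
  have haxis {t : ℝ} (ht : t ∈ Ioc (-ρ) 0) : (t, (0 : E)) ∈ U :=
    hρU (by simpa [Prod.dist_eq, abs_of_nonpos ht.2, hρ, neg_lt] using ht.1)
  have hK_ne : ∀ z ∈ frontier U ∩ {z | -ρ / 2 ≤ z.1}, 0 < ‖K z‖ := by
    rintro z ⟨hz, hzρ : -ρ / 2 ≤ z.1⟩
    refine norm_pos_iff.2 fun hKz => ?_
    rcases lt_or_ge z.1 0 with hz0 | hz0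
    · have hz_eq : z = (z.1, 0) := Prod.ext rfl (hsnd z hz0.le ▸ hKz)
      have hzU : z ∈ U := hz_eq ▸ haxis ⟨by linarith, hz0.le⟩
      exact (hU.frontier_eq ▸ hz).2 hzU
    · exact hfr z hz hz0 hKz
  obtain ⟨ε, hε, hKε⟩ := ((hUb.isCompact_closure.of_isClosed_subset isClosed_frontier
    frontier_subset_closure).inter_right (isClosed_le continuous_const continuous_fst)
    ).exists_forall_le' hK.norm.continuousOn hK_ne
  obtain ⟨G, hG, hGK, hG_eq, -⟩ := hK.exists_contDiff_approx_and_eqOn 2 (ε := fun _ => ε / 2)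
    continuous_const (fun _ => half_pos hε) (S := {z | z.1 ≤ -ρ / 4}) (U := {z | z.1 < 0})
    (isClosed_le continuous_fst continuous_const)
    ((isOpen_lt continuous_fst continuous_const).mem_nhdsSet.2 fun z (hz : z.1 ≤ -ρ / 4) =>
      show z.1 < 0 by linarith)
    (contDiff_snd.contDiffOn.congr fun z (hz : z.1 < 0) => hsnd z hz.le)
  obtain ⟨z, hz, hza, hGz⟩ := exists_mem_frontier_norm_le_of_contDiff hG hU hUb
    (a := -ρ / 2) (b := -ρ / 4) (by linarith) (half_pos hε)
    (fun t ht => haxis ⟨by linarith [ht.1], by linarith [ht.2]⟩)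
    (fun z hz => (hG_eq hz.le).trans (hsnd z (by linarith)))
  have hKz : ‖K z‖ < ε := calc
    ‖K z‖ ≤ ‖G z‖ + ‖G z - K z‖ := norm_le_insert _ _
    _ < ε / 2 + ε / 2 := add_lt_add_of_le_of_lt hGz (dist_eq_norm (G z) (K z) ▸ hGK z)
    _ = ε := add_halves ε
  exact (hKε z ⟨hz, hza⟩).not_gt hKz

theorem exists_zero_mem_frontier_of_norm_sub_lt {h : ℝ × E → E} (hh : Continuous h)
    {O : Set (ℝ × E)} (hO : IsOpen O) (hOb : Bornology.IsBounded O) {x₀ : E} (hx₀ : (0, x₀) ∈ O)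
    (hnear : ∀ x ∈ closure {x | (0, x) ∈ O}, x ≠ x₀ → ‖h (0, x) - (x - x₀)‖ < ‖x - x₀‖) :
    ∃ z ∈ frontier O, 0 ≤ z.1 ∧ h z = 0 := by
  -- `K` runs through the straight line from `x` to `h (0, x₀ + x)` for parameters in `[0, 1]` and
  -- only then through `h`.
  let g : ℝ × E → ℝ × E := fun z => (max 0 (z.1 - 1), x₀ + z.2)
  let t : ℝ × E → ℝ := fun z => max 0 (min 1 z.1)
  let K : ℝ × E → E := fun z => z.2 + t z • (h (g z) - z.2)
  let U : Set (ℝ × E) := {z | -1 < z.1} ∩ g ⁻¹' O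
  have hg : Continuous g := by fun_prop
  have hK : Continuous K := by fun_prop
  have hU : IsOpen U := (isOpen_lt continuous_const continuous_fst).inter (hO.preimage hg)
  have hUb : Bornology.IsBounded U := by
    obtain ⟨R, hR⟩ := hOb.exists_norm_le
    refine isBounded_iff_forall_norm_le.2 ⟨R + 1 + ‖x₀‖, fun z ⟨hz1, hzO⟩ => ?_⟩
    obtain ⟨hgz1, hgz2⟩ := norm_prod_le_iff.1 (hR _ hzO)
    have hz1' : z.1 - 1 ≤ R := (le_max_right _ _).trans ((Real.le_norm_self _).trans hgz1)
    have hz2 : ‖z.2‖ ≤ ‖x₀ + z.2‖ + ‖x₀‖ := norm_le_add_norm_add' _ _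
    have hR0 : 0 ≤ R := (norm_nonneg _).trans hgz1
    have hz1 : -1 < z.1 := hz1
    refine norm_prod_le_iff.2 ⟨abs_le.2 ⟨?_, ?_⟩, ?_⟩ <;> linarith [norm_nonneg x₀]
  have ht {z : ℝ × E} : t z ∈ Icc 0 1 := ⟨le_max_left _ _, max_le zero_le_one (min_le_left _ _)⟩
  obtain ⟨z, hzU, hz0, hKz⟩ := exists_zero_mem_frontier_of_eq_snd hK
    (fun z hz => by simp [K, t, hz]) hU hUb (by simpa [U, g] using hx₀)
  rw [hU.frontier_eq] at hzU
  have hgz : g z ∉ O := fun hgz => hzU.2 ⟨by simp only [mem_ofPred_eq]; linarith, hgz⟩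
  rcases lt_or_ge z.1 1 with hz1 | hz1
  · have hgz_eq : g z = (0, x₀ + z.2) := by simp [g, hz1.le]
    have hmem : x₀ + z.2 ∈ closure {x | (0, x) ∈ O} := by
      have hz_closure : z ∈ closure ({w | w.1 < 1} ∩ U) :=
        (isOpen_lt continuous_fst continuous_const).inter_closure ⟨hz1, hzU.1⟩
      have hadd : Continuous fun w : ℝ × E => x₀ + w.2 := by fun_prop
      refine map_mem_closure (f := fun w : ℝ × E => x₀ + w.2) hadd hz_closure ?_
      rintro w ⟨hw1 : w.1 < 1, -, hwO : g w ∈ O⟩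
      simpa [g, hw1.le] using hwO
    have hz2 : z.2 ≠ 0 := fun hz2 => hgz (by rwa [hgz_eq, hz2, add_zero])
    have hlt : ‖h (g z) - z.2‖ < ‖z.2‖ := by
      simpa [hgz_eq] using hnear _ hmem (by simpa using hz2)
    exact (add_smul_sub_ne_zero_of_norm_sub_lt ht hlt hKz).elim
  · have hgz_closure : g z ∈ closure O := map_mem_closure hg hzU.1 fun _ h => h.2
    refine ⟨g z, hO.frontier_eq ▸ ⟨hgz_closure, hgz⟩, le_max_left _ _, ?_⟩
    simpa [K, t, hz1] using hKz

theorem exists_zero_mem_frontier_of_continuousOn {h : ℝ × E → E} {O : Set (ℝ × E)}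
    (hh : ContinuousOn h (closure O ∩ {z | 0 ≤ z.1})) (hO : IsOpen O)
    (hOb : Bornology.IsBounded O) {x₀ : E} (hx₀ : (0, x₀) ∈ O)
    (hnear : ∀ x ∈ closure {x | (0, x) ∈ O}, x ≠ x₀ → ‖h (0, x) - (x - x₀)‖ < ‖x - x₀‖) :
    ∃ z ∈ frontier O, 0 ≤ z.1 ∧ h z = 0 := by
  obtain ⟨h', hh'⟩ := ContinuousMap.exists_restrict_eq
    (isClosed_closure.inter (isClosed_le continuous_const continuous_fst))
    ⟨_, hh.domRestrict⟩
  have h_eq {z : ℝ × E} (hz : z ∈ closure O) (hz0 : 0 ≤ z.1) : h' z = h z :=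
    DFunLike.congr_fun hh' ⟨z, hz, hz0⟩
  have hslice : ∀ x ∈ closure {x | (0, x) ∈ O}, ((0 : ℝ), x) ∈ closure O := fun x hx =>
    map_mem_closure (by fun_prop) hx fun _ => id
  obtain ⟨z, hz, hz0, hhz⟩ := exists_zero_mem_frontier_of_norm_sub_lt h'.continuous hO hOb hx₀
    fun x hx hxx₀ => h_eq (hslice x hx) le_rfl ▸ hnear x hx hxx₀
  exact ⟨z, hz, hz0, h_eq (frontier_subset_closure hz) hz0 ▸ hhz⟩

end FrontierZeros

section Component

variable {X : Type*} [TopologicalSpace X] [T2Space X]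

theorem exists_isClopen_subset_of_connectedComponent_subset [CompactSpace X] {x : X} {U : Set X}
    (hU : IsOpen U) (h : connectedComponent x ⊆ U) : ∃ Z : Set X, IsClopen Z ∧ x ∈ Z ∧ Z ⊆ U := by
  have : Nonempty {Z : Set X // IsClopen Z ∧ x ∈ Z} := ⟨⟨univ, isClopen_univ, mem_univ x⟩⟩
  rw [connectedComponent_eq_iInter_isClopen] at h
  obtain ⟨Z, hZ⟩ := exists_subset_nhds_of_compactSpace
    (V := fun Z : {Z : Set X // IsClopen Z ∧ x ∈ Z} => (Z : Set X))
    (fun Z W => ⟨⟨Z ∩ W, Z.2.1.inter W.2.1, Z.2.2, W.2.2⟩, inter_subset_left, inter_subset_right⟩)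
    (fun Z => Z.2.1.isClosed) (fun y hy => hU.mem_nhds (h hy))
  exact ⟨Z, Z.2.1, Z.2.2, hZ⟩

theorem exists_isOpen_disjoint_frontier_of_connectedComponentIn_subset {S V : Set X} {x : X}
    (hx : x ∈ S) (hV : IsOpen V) (hSV : IsCompact (S ∩ closure V))
    (h : connectedComponentIn S x ⊆ V) :
    ∃ O, IsOpen O ∧ x ∈ O ∧ O ⊆ V ∧ Disjoint (frontier O) S := by
  let T := S ∩ closure V
  have hxT : x ∈ T := ⟨hx, subset_closure (h (mem_connectedComponentIn hx))⟩
  have : CompactSpace T := isCompact_iff_compactSpace.1 hSV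
  obtain ⟨Z, hZ, hxZ, hZV⟩ := exists_isClopen_subset_of_connectedComponent_subset
    (x := (⟨x, hxT⟩ : T)) (hV.preimage continuous_subtype_val) (by
      rw [← image_subset_iff, ← connectedComponentIn_eq_image hxT]
      exact (connectedComponentIn_mono x inter_subset_left).trans h)
  obtain ⟨O, W, hO, hW, hZO, hZW, hOW⟩ := SeparatedNhds.of_isCompact_isCompact
    (hZ.isClosed.isCompact.image continuous_subtype_val)
    (hZ.compl.isClosed.isCompact.image continuous_subtype_val)
    ((disjoint_image_iff Subtype.val_injective).2 disjoint_compl_right)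
  refine ⟨O ∩ V, hO.inter hV, ⟨hZO ⟨_, hxZ, rfl⟩, hZV hxZ⟩, inter_subset_right, ?_⟩
  rw [(hO.inter hV).frontier_eq, disjoint_left]
  rintro y ⟨hy, hyOV⟩ hyS
  have hyT : y ∈ T := ⟨hyS, closure_mono inter_subset_right hy⟩
  by_cases hyZ : (⟨y, hyT⟩ : T) ∈ Z
  · exact hyOV ⟨hZO ⟨_, hyZ, rfl⟩, hZV hyZ⟩
  · have hyW : y ∈ W := hZW ⟨_, hyZ, rfl⟩
    exact disjoint_left.1 (hOW.closure_left hW) (closure_mono inter_subset_left hy) hyW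

end Component

/-- The zero set `H⁻¹(0)` of a homotopy `H` with parameter in `[0, 1)`. As `H` is encoded as a
total function on `ℝ × E`, the range of the parameter is part of the definition. -/
def homotopyZeros {E F : Type*} [Zero F] (H : ℝ × E → F) : Set (ℝ × E) :=
  {z | z.1 ∈ Ico 0 1 ∧ H z = 0}

theorem closure_inter_subset_Ico_prod {E : Type*} [TopologicalSpace E] {V : Set (ℝ × E)}
    {b c : ℝ} (hb : b < c) (hV : V ⊆ {z | z.1 < b}) :
    closure V ∩ {z | 0 ≤ z.1} ⊆ Ico 0 c ×ˢ univ := by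
  rintro z ⟨hzV, hz0⟩
  have hzb : z.1 ≤ b := closure_lt_subset_le continuous_fst continuous_const (closure_mono hV hzV)
  exact ⟨⟨hz0, hzb.trans_lt hb⟩, mem_univ _⟩

section IsolatingNeighborhood

variable {E F : Type*} [MetricSpace E] [ProperSpace E] [TopologicalSpace F] [T1Space F] [Zero F]
  {H : ℝ × E → F} {b : ℝ}

theorem isCompact_homotopyZeros_inter_closure (hH : ContinuousOn H (Ico 0 1 ×ˢ univ))
    {V : Set (ℝ × E)} (hVb : Bornology.IsBounded V) (hb : b < 1) (hV : V ⊆ {z | z.1 < b}) :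
    IsCompact (homotopyZeros H ∩ closure V) := by
  have hsub := closure_inter_subset_Ico_prod hb hV
  have hcompact : IsCompact (closure V ∩ {z | 0 ≤ z.1}) :=
    hVb.isCompact_closure.inter_right (isClosed_le continuous_const continuous_fst)
  have heq : homotopyZeros H ∩ closure V = (closure V ∩ {z | 0 ≤ z.1}) ∩ H ⁻¹' {0} := by
    ext z
    exact ⟨fun hz => ⟨⟨hz.2, hz.1.1.1⟩, hz.1.2⟩, fun hz => ⟨⟨(hsub hz.1).1, hz.2⟩, hz.1.1⟩⟩
  rw [heq]
  exact hcompact.of_isClosed_subset ((hH.mono hsub).preimage_isClosed_of_isClosed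
    hcompact.isClosed isClosed_singleton) inter_subset_left

theorem exists_isOpen_disjoint_frontier_homotopyZeros (hH : ContinuousOn H (Ico 0 1 ×ˢ univ))
    {x₀ : E} (hx₀ : H (0, x₀) = 0)
    (huniq : ∀ x, (0, x) ∈ connectedComponentIn (homotopyZeros H) (0, x₀) → x = x₀)
    (hbdd : Bornology.IsBounded (connectedComponentIn (homotopyZeros H) (0, x₀)))
    (hb : b < 1) (hlt : ∀ z ∈ connectedComponentIn (homotopyZeros H) (0, x₀), z.1 < b)
    {r : ℝ} (hr : 0 < r) :
    ∃ O, IsOpen O ∧ Bornology.IsBounded O ∧ (0, x₀) ∈ O ∧ O ⊆ {z | z.1 < b} ∧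
      {x | (0, x) ∈ O} ⊆ Metric.ball x₀ r ∧ Disjoint (frontier O) (homotopyZeros H) := by
  obtain ⟨R, hR⟩ := hbdd.subset_ball (0, x₀)
  let V : Set (ℝ × E) :=
    {z | z.1 < b} ∩ Metric.ball (0, x₀) R ∩ {z | z.1 ≠ 0 ∨ z.2 ∈ Metric.ball x₀ r}
  have hVb : Bornology.IsBounded V := Metric.isBounded_ball.subset fun _ hz => hz.1.2
  have hVlt : V ⊆ {z | z.1 < b} := fun _ hz => hz.1.1
  have hV : IsOpen V := ((isOpen_lt continuous_fst continuous_const).inter Metric.isOpen_ball).inter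
    ((isOpen_ne_fun continuous_fst continuous_const).union
      (Metric.isOpen_ball.preimage continuous_snd))
  have hCV : connectedComponentIn (homotopyZeros H) (0, x₀) ⊆ V := by
    rintro ⟨l, x⟩ hz
    refine ⟨⟨hlt _ hz, hR hz⟩, or_iff_not_imp_left.2 fun hl => ?_⟩
    obtain rfl : l = 0 := not_not.1 hl
    exact huniq x hz ▸ Metric.mem_ball_self hr
  have hz₀ : (0, x₀) ∈ homotopyZeros H := ⟨⟨le_rfl, one_pos⟩, hx₀⟩
  obtain ⟨O, hO, hxO, hOV, hOfr⟩ := exists_isOpen_disjoint_frontier_of_connectedComponentIn_subset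
    hz₀ hV (isCompact_homotopyZeros_inter_closure hH hVb hb hVlt) hCV
  exact ⟨O, hO, hVb.subset hOV, hxO, hOV.trans hVlt,
    fun x hx => (hOV hx).2.neg_resolve_left rfl, hOfr⟩

end IsolatingNeighborhood

section ZeroCurve

variable {E F : Type*} [NormedAddCommGroup E] [NormedSpace ℝ E] [NormedAddCommGroup F]
  [NormedSpace ℝ F]

theorem eventually_norm_symm_apply_sub_lt {f : E → F} {L : E ≃L[ℝ] F} {x₀ : E}
    (hf : HasFDerivAt f (L : E →L[ℝ] F) x₀) (hfx₀ : f x₀ = 0) :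
    ∀ᶠ x in 𝓝 x₀, x ≠ x₀ → ‖L.symm (f x) - (x - x₀)‖ < ‖x - x₀‖ := by
  have hid : HasFDerivAt (fun x => L.symm (f x)) (.id ℝ E) x₀ := by
    simpa [Function.comp_def] using L.symm.hasFDerivAt.comp x₀ hf
  filter_upwards [hid.isLittleO.def one_half_pos] with x hx hne
  have hpos : 0 < ‖x - x₀‖ := norm_pos_iff.2 (sub_ne_zero.2 hne)
  simp only [hfx₀, map_zero, sub_zero, ContinuousLinearMap.id_apply] at hx
  linarith

variable [FiniteDimensional ℝ E] {H : ℝ × E → F} {x₀ : E}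

theorem exists_mem_connectedComponentIn_le_fst (hH : ContinuousOn H (Ico 0 1 ×ˢ univ))
    (hx₀ : H (0, x₀) = 0) {L : E ≃L[ℝ] F}
    (hL : HasFDerivAt (fun x => H (0, x)) (L : E →L[ℝ] F) x₀)
    (huniq : ∀ x, (0, x) ∈ connectedComponentIn (homotopyZeros H) (0, x₀) → x = x₀)
    (hbdd : Bornology.IsBounded (connectedComponentIn (homotopyZeros H) (0, x₀))) {b : ℝ}
    (hb : b < 1) : ∃ z ∈ connectedComponentIn (homotopyZeros H) (0, x₀), b ≤ z.1 := by
  have : ProperSpace E := FiniteDimensional.proper_real E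
  by_contra! hlt
  obtain ⟨r, hr, hnear⟩ :=
    Metric.nhds_basis_closedBall.eventually_iff.1 (eventually_norm_symm_apply_sub_lt hL hx₀)
  obtain ⟨O, hO, hOb, hxO, hOlt, hOr, hOfr⟩ :=
    exists_isOpen_disjoint_frontier_homotopyZeros hH hx₀ huniq hbdd hb hlt hr
  have hsub := closure_inter_subset_Ico_prod hb hOlt
  have hslice : closure {x | (0, x) ∈ O} ⊆ Metric.closedBall x₀ r :=
    closure_minimal (hOr.trans Metric.ball_subset_closedBall) Metric.isClosed_closedBall
  obtain ⟨z, hz, hz0, hHz⟩ := exists_zero_mem_frontier_of_continuousOn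
    (h := fun z => L.symm (H z)) (L.symm.continuous.comp_continuousOn (hH.mono hsub)) hO hOb hxO
    fun x hx => hnear (hslice hx)
  exact disjoint_left.1 hOfr hz
    ⟨(hsub ⟨frontier_subset_closure hz, hz0⟩).1, L.symm.map_eq_zero_iff.1 hHz⟩

theorem zero_curve_reaches_lambda_one_general (hH : ContinuousOn H (Ico 0 1 ×ˢ univ))
    (hx₀ : H (0, x₀) = 0) {A : E →L[ℝ] F} (hA : HasFDerivAt (fun x => H (0, x)) A x₀)
    (hA_bij : Function.Bijective A)
    (huniq : ∀ x, (0, x) ∈ connectedComponentIn (homotopyZeros H) (0, x₀) → x = x₀)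
    (hbdd : Bornology.IsBounded (connectedComponentIn (homotopyZeros H) (0, x₀))) :
    sSup {l : ℝ | ∃ x, (l, x) ∈ connectedComponentIn (homotopyZeros H) (0, x₀)} = 1 := by
  have : FiniteDimensional ℝ F := .of_surjective A.toLinearMap hA_bij.2
  let L : E ≃L[ℝ] F := (LinearEquiv.ofBijective A.toLinearMap hA_bij).toContinuousLinearEquiv
  have hL : HasFDerivAt (fun x => H (0, x)) (L : E →L[ℝ] F) x₀ := hA
  refine csSup_eq_of_forall_le_of_forall_lt_exists_gt
    ⟨0, x₀, mem_connectedComponentIn ⟨⟨le_rfl, one_pos⟩, hx₀⟩⟩ ?_ fun l hl => ?_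
  · rintro l ⟨x, hx⟩
    exact (connectedComponentIn_subset _ _ hx).1.2.le
  · obtain ⟨b, hlb, hb⟩ := exists_between hl
    obtain ⟨z, hz, hbz⟩ := exists_mem_connectedComponentIn_le_fst hH hx₀ hL huniq hbdd hb
    exact ⟨z.1, ⟨z.2, hz⟩, hlb.trans_le hbz⟩

end ZeroCurve

/-- Let `H : [0,1) × ℝ^p → ℝ^p` be continuous, C¹ on `(0,1) × ℝ^p`
with `0` a regular value there, with a unique zero `(0, x₀)` at parameter level `0`
at which the partial Jacobian `∇ₓH(0,x₀)` is nonsingular. If the connected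
component `C` of `H⁻¹(0)` containing `(0, x₀)` is bounded, then
`sup{ λ : (λ, x) ∈ C } = 1`. -/
theorem zero_curve_reaches_lambda_one
    {p : ℕ} (H : ℝ × (Fin p → ℝ) → Fin p → ℝ)
    (hcont : ContinuousOn H (Set.Ico (0 : ℝ) 1 ×ˢ (Set.univ : Set (Fin p → ℝ))))
    (hcd : ContDiffOn ℝ 1 H (Set.Ioo (0 : ℝ) 1 ×ˢ (Set.univ : Set (Fin p → ℝ))))
    (hreg : ∀ z ∈ Set.Ioo (0 : ℝ) 1 ×ˢ (Set.univ : Set (Fin p → ℝ)),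
      H z = 0 → Function.Surjective (fderiv ℝ H z))
    (x₀ : Fin p → ℝ) (hx₀ : H (0, x₀) = 0)
    (huniq : ∀ x : Fin p → ℝ, H (0, x) = 0 → x = x₀)
    (hjac : Function.Bijective (fderiv ℝ (fun x => H (0, x)) x₀))
    (C : Set (ℝ × (Fin p → ℝ)))
    (hC : C = connectedComponentIn
      {z : ℝ × (Fin p → ℝ) | z.1 ∈ Set.Ico (0 : ℝ) 1 ∧ H z = 0} (0, x₀))
    (hbdd : Bornology.IsBounded C) :
    sSup {l : ℝ | ∃ x : Fin p → ℝ, (l, x) ∈ C} = 1 := by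
  subst hC
  exact zero_curve_reaches_lambda_one_general hcont hx₀
    (differentiableAt_of_fderiv_injective hjac.1).hasFDerivAt hjac
    (fun x hx => huniq x (connectedComponentIn_subset _ _ hx).2) hbdd
end
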